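/- arXiv:2507.01566 — 2 statements merged into one kernel-verified Lean document; each statement's English description precedes it below -/
import Mathlib

section
/- Let F be a function from the class 𝓗 to ℝ ∪ {+∞} which is invariant under isometries of ℝ², is lower semicontinuous along Hausdorff-convergent sequences in 𝓗 (i.e. liminf_n F(H_n) ≥ F(H) whenever H_n, H ∈ 𝓗 and H_n → H in Hausdorff distance), and is decreasing under Steiner symmetrization in the sense that F(S_π(H)) ≤ F(H) for every affine line π ⊆ ℝ² and every H ∈ 𝓗 such that S_π(H) ∈ 𝓗. Then, for any regular hexagon H* with |H*| = 1, one has F(H*) ≤ F(H) for every H ∈ 𝓗 with |H| = 1; that is, F attains its minimum over unit-area elements of 𝓗 at the regular hexagon. -/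
open MeasureTheory Metric Filter Real Set
open scoped Topology ENNReal NNReal RealInnerProductSpace

noncomputable section

/-- The Euclidean plane. -/
abbrev E2 : Type := EuclideanSpace ℝ (Fin 2)

/-- The line through `x` with direction `v`. -/
def lineThrough (x v : E2) : Set E2 := {y : E2 | ∃ t : ℝ, y = x + t • v}

/-- Steiner symmetrization of `A` with respect to the affine line `{x | ⟪x, v⟫ = c}`,
where `v` is a unit normal vector of the line. -/
def steiner (v : E2) (c : ℝ) (A : Set E2) : Set E2 :=
  {y : E2 | ∃ x : E2, ⟪x, v⟫ = c ∧ (A ∩ lineThrough x v).Nonempty ∧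
    ∃ r : ℝ, y = x + r • v ∧
      ENNReal.ofReal (2 * |r|) ≤ μH[1] (A ∩ lineThrough x v)}

/-- The class `𝓗` of centrally symmetric convex hexagons (possibly degenerated to
parallelograms), i.e. the convex polygons tiling the plane by translations. -/
def Hex (H : Set E2) : Prop :=
  (∃ x₀ p q r : E2, H = (fun y => x₀ + y) '' convexHull ℝ ({p, q, r, -p, -q, -r} : Set E2)) ∧
  (interior H).Nonempty

/-- The `k`-th vertex of the standard regular hexagon. -/
def hexVertex (k : ℕ) : E2 :=
  (WithLp.equiv 2 (Fin 2 → ℝ)).symm ![Real.cos (k * π / 3), Real.sin (k * π / 3)]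

/-- The standard regular hexagon, with vertices `(cos (kπ/3), sin (kπ/3))`, `k = 0, …, 5`. -/
def stdHexagon : Set E2 := convexHull ℝ (Set.range fun k : Fin 6 => hexVertex k)

/-- A similarity of the plane (composition of a rotation, a dilation and a translation,
possibly with a reflection). -/
def IsSimilarity (f : E2 → E2) : Prop :=
  ∃ s : ℝ, 0 < s ∧ ∀ x y, dist (f x) (f y) = s * dist x y

/-- A regular hexagon is any image of the standard one under a similarity. -/
def IsRegularHexagon (H : Set E2) : Prop := ∃ f : E2 → E2, IsSimilarity f ∧ H = f '' stdHexagon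

/-- Convergence of a sequence of sets in the Hausdorff distance. -/
def HausdorffTendsto (Hn : ℕ → Set E2) (H : Set E2) : Prop :=
  Tendsto (fun n => EMetric.hausdorffEdist (Hn n) H) atTop (𝓝 0)

/-- The planar cross product (determinant) of two vectors. -/
def det2 (u w : E2) : ℝ := u 0 * w 1 - u 1 * w 0

/-- `A, B, C, D, E, F` are (consecutive) vertices of the centrally symmetric hexagon `H`:
`H` is their convex hull, `D, E, F` are the antipodes of `A, B, C` with respect to a center
`o`, and `H` has nonempty interior. -/
def HexWithVertices (A B C D E F : E2) (H : Set E2) : Prop :=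
  H = convexHull ℝ ({A, B, C, D, E, F} : Set E2) ∧
  (∃ o : E2, D = (2:ℝ) • o - A ∧ E = (2:ℝ) • o - B ∧ F = (2:ℝ) • o - C) ∧
  (interior H).Nonempty

/-- The vertices `A, B, C, D, E, F` are listed in counterclockwise order. -/
def CCWList (A B C D E F : E2) : Prop :=
  0 ≤ det2 (B - A) (C - B) ∧ 0 ≤ det2 (C - B) (D - C) ∧ 0 ≤ det2 (D - C) (E - D) ∧
  0 ≤ det2 (E - D) (F - E) ∧ 0 ≤ det2 (F - E) (A - F) ∧ 0 ≤ det2 (A - F) (B - A)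

/-- The six vertices are distinct and no three of them are collinear. -/
def NondegenerateHex (A B C D E F : E2) : Prop :=
  [A, B, C, D, E, F].Pairwise (· ≠ ·) ∧
  ∀ P Q R : E2, P ∈ ({A, B, C, D, E, F} : Set E2) → Q ∈ ({A, B, C, D, E, F} : Set E2) →
    R ∈ ({A, B, C, D, E, F} : Set E2) → P ≠ Q → P ≠ R → Q ≠ R →
      ¬ Collinear ℝ ({P, Q, R} : Set E2)

/-- The convex hull of `±p, ±q, ±r`. -/
def hexHull (p q r : E2) : Set E2 := convexHull ℝ ({p, q, r, -p, -q, -r} : Set E2)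

/-- The points whose first coordinate `s` in the orthonormal basis `e` lies in `I` and whose
second coordinate is at distance at most `g s` from `c s`. -/
def slab (e : OrthonormalBasis (Fin 2) ℝ E2) (I : Set ℝ) (c g : ℝ → ℝ) : Set E2 :=
  {y | e.repr y 0 ∈ I ∧ |e.repr y 1 - c (e.repr y 0)| ≤ g (e.repr y 0)}

lemma repr_add_smul (e : OrthonormalBasis (Fin 2) ℝ E2) (s t : ℝ) :
    e.repr (s • e 0 + t • e 1) = !₂[s, t] := by
  ext i
  fin_cases i <;> simp

lemma eq_repr_smul (e : OrthonormalBasis (Fin 2) ℝ E2) (y : E2) :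
    y = e.repr y 0 • e 0 + e.repr y 1 • e 1 := by
  apply e.repr.injective
  rw [repr_add_smul]
  ext i
  fin_cases i <;> simp

lemma slab_inter_lineThrough (e : OrthonormalBasis (Fin 2) ℝ E2) (I : Set ℝ) (c g : ℝ → ℝ)
    {x : E2} (hx : e.repr x 1 = 0) :
    slab e I c g ∩ lineThrough x (e 1) =
      (fun t : ℝ => x + t • e 1) ''
        {t | e.repr x 0 ∈ I ∧ |t - c (e.repr x 0)| ≤ g (e.repr x 0)} := by
  ext y
  constructor
  · rintro ⟨hy, t, rfl⟩
    refine ⟨t, ?_, rfl⟩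
    simpa [slab, hx] using hy
  · rintro ⟨t, ht, rfl⟩
    refine ⟨?_, t, rfl⟩
    simpa [slab, hx] using ht

lemma hausdorffMeasure_slab_inter_lineThrough (e : OrthonormalBasis (Fin 2) ℝ E2) (I : Set ℝ)
    (c g : ℝ → ℝ) {x : E2} (hx : e.repr x 1 = 0) (hI : e.repr x 0 ∈ I) :
    μH[1] (slab e I c g ∩ lineThrough x (e 1)) = ENNReal.ofReal (2 * g (e.repr x 0)) := by
  have hiso : Isometry (fun t : ℝ => x + t • e 1) := by
    refine Isometry.of_dist_eq fun s t => ?_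
    rw [dist_add_left, dist_eq_norm, ← sub_smul, norm_smul, e.orthonormal.1, mul_one,
      Real.dist_eq, Real.norm_eq_abs]
  rw [slab_inter_lineThrough e I c g hx, hiso.hausdorffMeasure_image (Or.inl zero_le_one),
    hausdorffMeasure_real]
  have : {t | e.repr x 0 ∈ I ∧ |t - c (e.repr x 0)| ≤ g (e.repr x 0)} =
      Icc (c (e.repr x 0) - g (e.repr x 0)) (c (e.repr x 0) + g (e.repr x 0)) := by
    ext t
    simp only [hI, true_and, mem_ofPred_eq, mem_Icc, abs_le]
    constructor <;> rintro ⟨h₁, h₂⟩ <;> constructor <;> linarith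
  rw [this, Real.volume_Icc]
  congr 1
  ring

/-- Steiner symmetrization recentres the sections of a slab. -/
lemma steiner_slab (e : OrthonormalBasis (Fin 2) ℝ E2) (I : Set ℝ) (c g : ℝ → ℝ)
    (hg : ∀ s ∈ I, 0 ≤ g s) :
    steiner (e 1) 0 (slab e I c g) = slab e I 0 g := by
  have hinner : ∀ x : E2, ⟪x, e 1⟫ = e.repr x 1 := fun x => by
    rw [real_inner_comm, e.repr_apply_apply]
  ext y
  constructor
  · rintro ⟨x, hx, hne, r, rfl, hr⟩
    rw [hinner] at hx
    rw [slab_inter_lineThrough e I c g hx] at hne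
    obtain ⟨-, t, ⟨hI, -⟩, -⟩ := hne
    rw [hausdorffMeasure_slab_inter_lineThrough e I c g hx hI,
      ENNReal.ofReal_le_ofReal_iff (by linarith [hg _ hI])] at hr
    simp [slab, hx, hI]
    linarith
  · rintro ⟨hI, hy⟩
    have hx : e.repr (e.repr y 0 • e 0 + (0 : ℝ) • e 1) = !₂[e.repr y 0, 0] := repr_add_smul ..
    have hx0 : e.repr (e.repr y 0 • e 0 + (0 : ℝ) • e 1) 0 = e.repr y 0 := by rw [hx]; rfl
    have hx1 : e.repr (e.repr y 0 • e 0 + (0 : ℝ) • e 1) 1 = 0 := by rw [hx]; rfl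
    refine ⟨_, (hinner _).trans hx1, ?_, e.repr y 1, ?_, ?_⟩
    · rw [slab_inter_lineThrough e I c g hx1, hx0]
      exact Set.Nonempty.image _ ⟨c (e.repr y 0), hI, by simpa using hg _ hI⟩
    · rw [zero_smul, add_zero, ← eq_repr_smul]
    · rw [hausdorffMeasure_slab_inter_lineThrough e I c g hx1 (by rwa [hx0]), hx0]
      apply ENNReal.ofReal_le_ofReal
      simp only [Pi.zero_apply, sub_zero] at hy
      linarith

lemma measurePreserving_smul_add_smul (e : OrthonormalBasis (Fin 2) ℝ E2) :
    MeasurePreserving (fun x : ℝ × ℝ => x.1 • e 0 + x.2 • e 1) := by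
  have h := (e.measurePreserving_repr_symm.comp
    (PiLp.volume_preserving_toLp (Fin 2))).comp ((volume_preserving_finTwoArrow ℝ).symm _)
  have heq : (fun x : ℝ × ℝ => x.1 • e 0 + x.2 • e 1) =
      (e.repr.symm ∘ WithLp.toLp 2) ∘ MeasurableEquiv.finTwoArrow.symm := by
    ext1 x
    apply e.repr.injective
    rw [repr_add_smul, Function.comp_apply, Function.comp_apply, e.repr.apply_symm_apply]
    rfl
  rwa [heq]

lemma volume_slab (e : OrthonormalBasis (Fin 2) ℝ E2) {I : Set ℝ} (hI : MeasurableSet I)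
    {c g : ℝ → ℝ} (hm : MeasurableSet (slab e I c g)) :
    volume (slab e I c g) = ∫⁻ s in I, ENNReal.ofReal (2 * g s) := by
  have hmp := measurePreserving_smul_add_smul e
  rw [← hmp.measure_preimage hm.nullMeasurableSet, Measure.volume_eq_prod,
    Measure.prod_apply (hmp.measurable hm), ← lintegral_indicator hI]
  congr 1
  ext1 s
  by_cases hs : s ∈ I
  · rw [indicator_of_mem hs]
    have : Prod.mk s ⁻¹' ((fun x : ℝ × ℝ => x.1 • e 0 + x.2 • e 1) ⁻¹' slab e I c g) =
        Icc (c s - g s) (c s + g s) := by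
      ext t
      simp only [slab, mem_preimage, mem_ofPred_eq, repr_add_smul, mem_Icc]
      simp only [Matrix.cons_val_zero, Matrix.cons_val_one, hs, true_and, abs_le]
      constructor <;> rintro ⟨h₁, h₂⟩ <;> constructor <;> linarith
    rw [this, Real.volume_Icc]
    congr 1
    ring
  · rw [indicator_of_notMem hs]
    have : Prod.mk s ⁻¹' ((fun x : ℝ × ℝ => x.1 • e 0 + x.2 • e 1) ⁻¹' slab e I c g) = ∅ := by
      ext t
      simp [slab, hs]
    rw [this, measure_empty]

/-- Half the length of the vertical section at abscissa `s` of the hexagon with vertices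
`(±b, ±h)` and `(±a, 0)`. -/
def halfWidth (a b h s : ℝ) : ℝ := if |s| ≤ b then h else h * (a - |s|) / (a - b)

/-- Midpoint of the vertical section at abscissa `s` of the hexagon with vertices
`(±b, ±h)` and `±(a, z)`. -/
def midline (a b z s : ℝ) : ℝ :=
  if |s| ≤ b then 0 else if 0 ≤ s then z * (s - b) / (a - b) else z * (s + b) / (a - b)

lemma halfWidth_nonneg {a b h : ℝ} (hh : 0 ≤ h) {s : ℝ} (hs : |s| ≤ a) :
    0 ≤ halfWidth a b h s := by
  unfold halfWidth
  split_ifs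
  · exact hh
  · exact div_nonneg (mul_nonneg hh (by linarith)) (by linarith)

lemma abs_sub_midline_le_halfWidth_iff {a b h z s t : ℝ} (hab : b ≤ a) (hb : 0 < b)
    (hz : |z| ≤ h) (hs : |s| ≤ a) :
    |t - midline a b z s| ≤ halfWidth a b h s ↔
      |t| ≤ h ∧ |(a - b) * t - z * (s - b)| ≤ h * (a - s) ∧
        |(a - b) * t - z * (s + b)| ≤ h * (a + s) := by
  obtain ⟨hz₁, hz₂⟩ := abs_le.1 hz
  obtain ⟨hs₁, hs₂⟩ := abs_le.1 hs
  unfold midline halfWidth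
  split_ifs with hsb h0
  · obtain ⟨hsb₁, hsb₂⟩ := abs_le.1 hsb
    simp only [sub_zero, abs_le]
    constructor
    · rintro ⟨h₁, h₂⟩
      refine ⟨⟨h₁, h₂⟩, ⟨?_, ?_⟩, ⟨?_, ?_⟩⟩ <;> nlinarith
    · exact fun h => h.1
  · rw [abs_of_nonneg h0] at hsb ⊢
    have hpos : 0 < a - b := by linarith [abs_of_nonneg h0]
    have e₁ : t - z * (s - b) / (a - b) = ((a - b) * t - z * (s - b)) / (a - b) := by
      field_simp
    rw [e₁, abs_div, abs_of_pos hpos, div_le_div_iff_of_pos_right hpos]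
    constructor
    · intro h₁
      obtain ⟨h₁l, h₁u⟩ := abs_le.1 h₁
      have ht : |t| ≤ h := by
        rw [abs_le]
        constructor <;> nlinarith
      obtain ⟨htl, htu⟩ := abs_le.1 ht
      refine ⟨ht, h₁, abs_le.2 ⟨?_, ?_⟩⟩ <;> nlinarith
    · exact fun h => h.2.1
  · push Not at h0
    rw [abs_of_neg h0] at hsb ⊢
    have hpos : 0 < a - b := by linarith
    have e₁ : t - z * (s + b) / (a - b) = ((a - b) * t - z * (s + b)) / (a - b) := by
      field_simp
    rw [e₁, abs_div, abs_of_pos hpos, div_le_div_iff_of_pos_right hpos, sub_neg_eq_add]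
    constructor
    · intro h₁
      obtain ⟨h₁l, h₁u⟩ := abs_le.1 h₁
      have ht : |t| ≤ h := by
        rw [abs_le]
        constructor <;> nlinarith
      obtain ⟨htl, htu⟩ := abs_le.1 ht
      refine ⟨ht, abs_le.2 ⟨?_, ?_⟩, h₁⟩ <;> nlinarith
    · exact fun h => h.2.2

lemma convex_abs_le_affine (x y z u v w : ℝ) :
    Convex ℝ {m : ℝ × ℝ | |x * m.1 + y * m.2 + z| ≤ u * m.1 + v * m.2 + w} := by
  intro m hm n hn α β hα hβ hαβ
  simp only [mem_ofPred_eq, abs_le, Prod.fst_add, Prod.snd_add, Prod.smul_fst, Prod.smul_snd,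
    smul_eq_mul] at *
  obtain rfl : β = 1 - α := by linarith
  constructor <;> nlinarith [mul_le_mul_of_nonneg_left hm.1 hα, mul_le_mul_of_nonneg_left hm.2 hα,
    mul_le_mul_of_nonneg_left hn.1 hβ, mul_le_mul_of_nonneg_left hn.2 hβ]

lemma Convex.mk_mem_of_interpolation {S : Set (ℝ × ℝ)} (hS : Convex ℝ S) {x₀ y₀ x₁ y₁ : ℝ}
    (h₀ : (x₀, y₀) ∈ S) (h₁ : (x₁, y₁) ∈ S) {θ : ℝ} (hθ₀ : 0 ≤ θ) (hθ₁ : θ ≤ 1) {x y : ℝ}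
    (hx : x = (1 - θ) * x₀ + θ * x₁) (hy : y = (1 - θ) * y₀ + θ * y₁) : (x, y) ∈ S := by
  have := hS h₀ h₁ (sub_nonneg.2 hθ₁) hθ₀ (by ring)
  simpa [hx, hy] using this

/-- A hexagon made of the rectangle with vertices `(±b, ±h)` and the apexes `±(a, z)`, described
through its vertical sections. -/
lemma convexHull_hexagon_eq {a b h z : ℝ} (hab : b ≤ a) (hb : 0 < b) (hh : 0 < h)
    (hz : |z| ≤ h) :
    convexHull ℝ ({(b, h), (b, -h), (a, z), (-b, -h), (-b, h), (-a, -z)} : Set (ℝ × ℝ)) =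
      {m | |m.1| ≤ a ∧ |m.2 - midline a b z m.1| ≤ halfWidth a b h m.1} := by
  obtain ⟨hz₁, hz₂⟩ := abs_le.1 hz
  apply Subset.antisymm
  · have hset : {m : ℝ × ℝ | |m.1| ≤ a ∧ |m.2 - midline a b z m.1| ≤ halfWidth a b h m.1} =
        {m : ℝ × ℝ | |1 * m.1 + 0 * m.2 + 0| ≤ 0 * m.1 + 0 * m.2 + a} ∩
        ({m : ℝ × ℝ | |0 * m.1 + 1 * m.2 + 0| ≤ 0 * m.1 + 0 * m.2 + h} ∩
        ({m : ℝ × ℝ | |(-z) * m.1 + (a - b) * m.2 + z * b| ≤ (-h) * m.1 + 0 * m.2 + h * a} ∩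
        {m : ℝ × ℝ | |(-z) * m.1 + (a - b) * m.2 + (-z * b)| ≤ h * m.1 + 0 * m.2 + h * a})) := by
      ext ⟨s, t⟩
      simp only [mem_ofPred_eq, mem_inter_iff]
      ring_nf
      rw [and_congr_right_iff]
      intro hs
      convert abs_sub_midline_le_halfWidth_iff hab hb hz hs using 3 <;> ring_nf
    rw [hset]
    refine convexHull_min ?_ ((convex_abs_le_affine ..).inter ((convex_abs_le_affine ..).inter
      ((convex_abs_le_affine ..).inter (convex_abs_le_affine ..))))
    rintro m (rfl | rfl | rfl | rfl | rfl | rfl) <;>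
      simp only [mem_inter_iff, mem_ofPred_eq, abs_le] <;>
      refine ⟨⟨?_, ?_⟩, ⟨?_, ?_⟩, ⟨?_, ?_⟩, ⟨?_, ?_⟩⟩ <;> nlinarith
  · set S : Set (ℝ × ℝ) := {(b, h), (b, -h), (a, z), (-b, -h), (-b, h), (-a, -z)} with hSdef
    have hS := convex_convexHull ℝ S
    have hsub : S ⊆ convexHull ℝ S := subset_convexHull ℝ S
    have hright : ∀ t, |t| ≤ h → (b, t) ∈ convexHull ℝ S := by
      intro t ht
      obtain ⟨ht₁, ht₂⟩ := abs_le.1 ht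
      refine hS.mk_mem_of_interpolation (hsub (show (b, -h) ∈ S by simp [hSdef]))
        (hsub (show (b, h) ∈ S by simp [hSdef])) (θ := (h + t) / (2 * h)) ?_ ?_ ?_ ?_
      · exact div_nonneg (by linarith) (by linarith)
      · rw [div_le_one (by linarith)]; linarith
      · ring
      · field_simp; ring
    have hleft : ∀ t, |t| ≤ h → (-b, t) ∈ convexHull ℝ S := by
      intro t ht
      obtain ⟨ht₁, ht₂⟩ := abs_le.1 ht
      refine hS.mk_mem_of_interpolation (hsub (show (-b, -h) ∈ S by simp [hSdef]))
        (hsub (show (-b, h) ∈ S by simp [hSdef])) (θ := (h + t) / (2 * h)) ?_ ?_ ?_ ?_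
      · exact div_nonneg (by linarith) (by linarith)
      · rw [div_le_one (by linarith)]; linarith
      · ring
      · field_simp; ring
    rintro ⟨s, t⟩ ⟨hs, ht⟩
    obtain ⟨hs₁, hs₂⟩ := abs_le.1 hs
    simp only [midline, halfWidth] at ht
    split_ifs at ht with hsb h0
    · rw [sub_zero] at ht
      obtain ⟨hsb₁, hsb₂⟩ := abs_le.1 hsb
      refine hS.mk_mem_of_interpolation (hleft t ht) (hright t ht)
        (θ := (b + s) / (2 * b)) ?_ ?_ ?_ ?_
      · exact div_nonneg (by linarith) (by linarith)
      · rw [div_le_one (by linarith)]; linarith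
      · field_simp; ring
      · ring
    · simp only [abs_of_nonneg h0, not_le] at hsb ht hs
      have hpos : 0 < a - b := by linarith
      rcases hs.eq_or_lt with rfl | hsa
      · have : t = z := by
          simp only [sub_self, mul_zero, zero_div, abs_nonpos_iff] at ht
          field_simp at ht
          linarith
        subst this
        exact hsub (by simp [hSdef])
      · have hpos' : 0 < a - s := by linarith
        refine hS.mk_mem_of_interpolation
          (hright (((a - b) * t - z * (s - b)) / (a - s)) ?_)
          (hsub (show (a, z) ∈ S by simp [hSdef])) (θ := (s - b) / (a - b)) ?_ ?_ ?_ ?_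
        · rw [abs_div, abs_of_pos hpos', div_le_iff₀ hpos']
          have e₁ : t - z * (s - b) / (a - b) = ((a - b) * t - z * (s - b)) / (a - b) := by
            field_simp
          rwa [e₁, abs_div, abs_of_pos hpos, div_le_div_iff_of_pos_right hpos] at ht
        · exact div_nonneg (by linarith) hpos.le
        · rw [div_le_one hpos]; linarith
        · field_simp; ring
        · field_simp; ring
    · push Not at h0
      simp only [abs_of_neg h0, not_le] at hsb ht hs
      have hpos : 0 < a - b := by linarith
      rcases hs.eq_or_lt with rfl | hsa
      · have : t = -z := by
          simp only [sub_self, mul_zero, zero_div, abs_nonpos_iff] at ht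
          field_simp at ht
          have hmul : (t + z) * (-s - b) = 0 := by linarith
          rcases mul_eq_zero.1 hmul with h' | h' <;> linarith
        subst this
        exact hsub (by simp [hSdef])
      · have hpos' : 0 < a + s := by linarith
        refine hS.mk_mem_of_interpolation
          (hleft (((a - b) * t - z * (s + b)) / (a + s)) ?_)
          (hsub (show (-a, -z) ∈ S by simp [hSdef])) (θ := (-s - b) / (a - b)) ?_ ?_ ?_ ?_
        · rw [abs_div, abs_of_pos hpos', div_le_iff₀ hpos']
          have e₁ : t - z * (s + b) / (a - b) = ((a - b) * t - z * (s + b)) / (a - b) := by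
            field_simp
          rwa [e₁, abs_div, abs_of_pos hpos, div_le_div_iff_of_pos_right hpos,
            sub_neg_eq_add] at ht
        · exact div_nonneg (by linarith) hpos.le
        · rw [div_le_one hpos]; linarith
        · field_simp; ring
        · field_simp; ring

lemma hexHull_eq_slab (e : OrthonormalBasis (Fin 2) ℝ E2) {a b h z : ℝ} (k : ℝ) (hab : b ≤ a)
    (hb : 0 < b) (hh : 0 < h) (hz : |z| ≤ h) :
    hexHull (b • e 0 + (k * b + h) • e 1) (b • e 0 + (k * b - h) • e 1)
        (a • e 0 + (k * a + z) • e 1) =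
      slab e (Icc (-a) a) (fun s => k * s + midline a b z s) (halfWidth a b h) := by
  let Φ : ℝ × ℝ →ₗ[ℝ] E2 := (LinearMap.fst ℝ ℝ ℝ).smulRight (e 0 + k • e 1) +
    (LinearMap.snd ℝ ℝ ℝ).smulRight (e 1)
  have hΦ : ∀ s t : ℝ, Φ (s, t) = s • e 0 + (k * s + t) • e 1 := by
    intro s t
    simp only [Φ, LinearMap.add_apply, LinearMap.smulRight_apply, LinearMap.fst_apply,
      LinearMap.snd_apply]
    module
  have himage : hexHull (b • e 0 + (k * b + h) • e 1) (b • e 0 + (k * b - h) • e 1)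
      (a • e 0 + (k * a + z) • e 1) =
      Φ '' convexHull ℝ {(b, h), (b, -h), (a, z), (-b, -h), (-b, h), (-a, -z)} := by
    rw [LinearMap.image_convexHull, hexHull]
    simp only [image_insert_eq, image_singleton, hΦ]
    have h₁ : b • e 0 + (k * b + -h) • e 1 = b • e 0 + (k * b - h) • e 1 := by module
    have h₂ : -b • e 0 + (k * -b + -h) • e 1 = -(b • e 0 + (k * b + h) • e 1) := by module
    have h₃ : -b • e 0 + (k * -b + h) • e 1 = -(b • e 0 + (k * b - h) • e 1) := by module
    have h₄ : -a • e 0 + (k * -a + -z) • e 1 = -(a • e 0 + (k * a + z) • e 1) := by module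
    rw [h₁, h₂, h₃, h₄]
  rw [himage, convexHull_hexagon_eq hab hb hh hz]
  ext y
  constructor
  · rintro ⟨⟨s, t⟩, ⟨hs, ht⟩, rfl⟩
    rw [hΦ]
    simp only [slab, mem_ofPred_eq, repr_add_smul]
    simp only [Matrix.cons_val_zero, Matrix.cons_val_one]
    exact ⟨abs_le.1 hs, by convert ht using 2; ring⟩
  · rintro ⟨hs, ht⟩
    refine ⟨(e.repr y 0, e.repr y 1 - k * e.repr y 0), ⟨abs_le.2 hs, ?_⟩, ?_⟩
    · convert ht using 2
      ring
    · rw [hΦ, add_sub_cancel, ← eq_repr_smul]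

/-- The hexagon with vertices `(±b, ±h)` and `(±a, 0)` in the orthonormal basis `e`. -/
def symHex (e : OrthonormalBasis (Fin 2) ℝ E2) (a b h : ℝ) : Set E2 :=
  hexHull (b • e 0 + h • e 1) (b • e 0 - h • e 1) (a • e 0)

lemma symHex_eq_slab (e : OrthonormalBasis (Fin 2) ℝ E2) {a b h : ℝ} (hab : b ≤ a)
    (hb : 0 < b) (hh : 0 < h) :
    symHex e a b h = slab e (Icc (-a) a) 0 (halfWidth a b h) := by
  have key := hexHull_eq_slab e 0 hab hb hh (z := 0) (by simpa using hh.le)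
  have hmid : (fun s : ℝ => 0 * s + midline a b 0 s) = 0 := by
    ext s
    simp [midline]
  rw [hmid] at key
  rw [← key, symHex]
  congr 1 <;> module

lemma steiner_hexHull (e : OrthonormalBasis (Fin 2) ℝ E2) {a b h z : ℝ} (k : ℝ) (hab : b ≤ a)
    (hb : 0 < b) (hh : 0 < h) (hz : |z| ≤ h) :
    steiner (e 1) 0 (hexHull (b • e 0 + (k * b + h) • e 1) (b • e 0 + (k * b - h) • e 1)
        (a • e 0 + (k * a + z) • e 1)) = symHex e a b h := by
  rw [hexHull_eq_slab e k hab hb hh hz, symHex_eq_slab e hab hb hh]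
  exact steiner_slab e _ _ _ fun s hs => halfWidth_nonneg hh.le (abs_le.2 hs)

lemma isCompact_hexHull (p q r : E2) : IsCompact (hexHull p q r) :=
  (Set.toFinite _).isCompact_convexHull ℝ

lemma volume_hexHull_eq_volume_symHex (e : OrthonormalBasis (Fin 2) ℝ E2) {a b h z : ℝ} (k : ℝ)
    (hab : b ≤ a) (hb : 0 < b) (hh : 0 < h) (hz : |z| ≤ h) :
    volume (hexHull (b • e 0 + (k * b + h) • e 1) (b • e 0 + (k * b - h) • e 1)
        (a • e 0 + (k * a + z) • e 1)) = volume (symHex e a b h) := by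
  have h₁ := hexHull_eq_slab e k hab hb hh hz
  have h₂ := symHex_eq_slab e hab hb hh
  rw [h₁, h₂, volume_slab e measurableSet_Icc (h₁ ▸ (isCompact_hexHull ..).measurableSet),
    volume_slab e measurableSet_Icc (h₂ ▸ (isCompact_hexHull ..).measurableSet)]

lemma symHex_eq_slab_swap (e : OrthonormalBasis (Fin 2) ℝ E2) {a b h : ℝ} (hab : b ≤ a)
    (hb : 0 < b) (hh : 0 < h) :
    symHex e a b h = slab (e.reindex (Equiv.swap 0 1)) (Icc (-h) h) 0
      (fun t => a - (a - b) / h * |t|) := by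
  rw [symHex_eq_slab e hab hb hh]
  ext y
  have h0 : (e.reindex (Equiv.swap 0 1)).repr y 0 = e.repr y 1 := by
    simp [OrthonormalBasis.repr_reindex]
  have h1 : (e.reindex (Equiv.swap 0 1)).repr y 1 = e.repr y 0 := by
    simp [OrthonormalBasis.repr_reindex]
  simp only [slab, mem_ofPred_eq, h0, h1, Pi.zero_apply, sub_zero]
  generalize e.repr y 0 = s
  generalize e.repr y 1 = t
  have hfrac : ∀ x : ℝ, (a - b) / h * x = (a - b) * x / h := fun x => by ring
  constructor
  · rintro ⟨hs, ht⟩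
    unfold halfWidth at ht
    split_ifs at ht with hsb
    · refine ⟨abs_le.1 ht, ?_⟩
      have : (a - b) / h * |t| ≤ a - b := by
        rw [hfrac, div_le_iff₀ hh]
        exact mul_le_mul_of_nonneg_left ht (by linarith)
      linarith
    · have hsa := abs_le.2 hs
      have hpos : 0 < a - b := by linarith
      rw [le_div_iff₀ hpos] at ht
      have : (a - b) / h * |t| ≤ a - |s| := by
        rw [hfrac, div_le_iff₀ hh]
        linarith
      exact ⟨abs_le.1 (by nlinarith), by linarith⟩
  · rintro ⟨ht, hs⟩
    have hta := abs_le.2 ht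
    have hmul : (a - b) / h * |t| * h = (a - b) * |t| := by field_simp
    have hnn : 0 ≤ (a - b) / h * |t| := by
      have : 0 ≤ a - b := by linarith
      positivity
    refine ⟨abs_le.1 (by linarith), ?_⟩
    unfold halfWidth
    split_ifs with hsb
    · exact hta
    · have hpos : 0 < a - b := by linarith
      rw [le_div_iff₀ hpos]
      nlinarith

lemma integral_abs_symm {h : ℝ} (hh : 0 ≤ h) : ∫ t in (-h)..h, |t| = h ^ 2 := by
  have habs_int : ∀ x y : ℝ, IntervalIntegrable (fun t : ℝ => |t|) volume x y := fun x y =>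
    continuous_abs.intervalIntegrable x y
  rw [← intervalIntegral.integral_add_adjacent_intervals (habs_int (-h) 0) (habs_int 0 h)]
  have h₁ : ∫ t in (-h)..0, |t| = ∫ t in (-h)..0, -t := by
    refine intervalIntegral.integral_congr fun t ht => ?_
    rw [uIcc_of_le (by linarith)] at ht
    exact abs_of_nonpos ht.2
  have h₂ : ∫ t in (0 : ℝ)..h, |t| = ∫ t in (0 : ℝ)..h, t := by
    refine intervalIntegral.integral_congr fun t ht => ?_
    rw [uIcc_of_le hh] at ht
    exact abs_of_nonneg ht.1
  rw [h₁, h₂, intervalIntegral.integral_neg, integral_id, integral_id]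
  ring

lemma volume_symHex (e : OrthonormalBasis (Fin 2) ℝ E2) {a b h : ℝ} (hab : b ≤ a)
    (hb : 0 < b) (hh : 0 < h) :
    volume (symHex e a b h) = ENNReal.ofReal (2 * h * (a + b)) := by
  have heq := symHex_eq_slab_swap e hab hb hh
  rw [heq, volume_slab _ measurableSet_Icc (heq ▸ (isCompact_hexHull ..).measurableSet),
    ← ofReal_integral_eq_lintegral_ofReal]
  · congr 1
    rw [integral_Icc_eq_integral_Ioc, ← intervalIntegral.integral_of_le (by linarith),
      intervalIntegral.integral_const_mul, intervalIntegral.integral_sub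
        intervalIntegrable_const (Continuous.intervalIntegrable (by fun_prop) _ _),
      intervalIntegral.integral_const_mul, integral_abs_symm hh.le,
      intervalIntegral.integral_const]
    simp only [smul_eq_mul]
    field_simp
    ring
  · exact (Continuous.continuousOn (by fun_prop)).integrableOn_Icc
  · refine (ae_restrict_iff' measurableSet_Icc).2 (Eventually.of_forall fun t ht => ?_)
    have : (a - b) / h * |t| ≤ a - b := by
      rw [div_mul_eq_mul_div, div_le_iff₀ hh]
      exact mul_le_mul_of_nonneg_left (abs_le.2 ht) (by linarith)
    simp only [Pi.zero_apply]
    linarith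

lemma symHex_eq_image (e : OrthonormalBasis (Fin 2) ℝ E2) (a b h : ℝ) :
    symHex e a b h = e.repr.symm '' symHex (EuclideanSpace.basisFun (Fin 2) ℝ) a b h := by
  have himg := LinearMap.image_convexHull (e.repr.symm.toLinearEquiv : E2 →ₗ[ℝ] E2)
    {b • EuclideanSpace.basisFun (Fin 2) ℝ 0 + h • EuclideanSpace.basisFun (Fin 2) ℝ 1,
      b • EuclideanSpace.basisFun (Fin 2) ℝ 0 - h • EuclideanSpace.basisFun (Fin 2) ℝ 1,
      a • EuclideanSpace.basisFun (Fin 2) ℝ 0,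
      -(b • EuclideanSpace.basisFun (Fin 2) ℝ 0 + h • EuclideanSpace.basisFun (Fin 2) ℝ 1),
      -(b • EuclideanSpace.basisFun (Fin 2) ℝ 0 - h • EuclideanSpace.basisFun (Fin 2) ℝ 1),
      -(a • EuclideanSpace.basisFun (Fin 2) ℝ 0)}
  refine Eq.trans ?_ himg.symm
  simp [symHex, hexHull, image_insert_eq]

lemma hex_hexHull {p q r : E2} (hvol : volume (hexHull p q r) ≠ 0) : Hex (hexHull p q r) := by
  refine ⟨⟨0, p, q, r, by simp [hexHull]⟩, ?_⟩
  by_contra hne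
  rw [not_nonempty_iff_eq_empty] at hne
  apply hvol
  have hfr := (convex_convexHull ℝ ({p, q, r, -p, -q, -r} : Set E2)).addHaar_frontier volume
  refine measure_mono_null ?_ hfr
  rw [frontier, show interior (convexHull ℝ {p, q, r, -p, -q, -r}) = ∅ from hne, sdiff_empty]
  exact subset_closure

lemma hex_symHex (e : OrthonormalBasis (Fin 2) ℝ E2) {a b h : ℝ} (hab : b ≤ a)
    (hb : 0 < b) (hh : 0 < h) : Hex (symHex e a b h) := by
  apply hex_hexHull
  change volume (symHex e a b h) ≠ 0
  rw [volume_symHex e hab hb hh]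
  have : 0 < 2 * h * (a + b) := by
    have : 0 < a + b := by linarith
    positivity
  simpa using this

lemma exists_orthonormalBasis_of_norm_eq_one {v : E2} (hv : ‖v‖ = 1) {ε : ℝ} (hε : ε ^ 2 = 1) :
    ∃ e : OrthonormalBasis (Fin 2) ℝ E2, e 0 = ε • !₂[v 1, -v 0] ∧ e 1 = v := by
  have hsq : v 0 ^ 2 + v 1 ^ 2 = 1 := by
    have := EuclideanSpace.real_norm_sq_eq v
    rw [hv, Fin.sum_univ_two] at this
    linarith
  have hon : Orthonormal ℝ ![ε • !₂[v 1, -v 0], v] := by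
    rw [orthonormal_iff_ite]
    intro i j
    fin_cases i <;> fin_cases j <;>
      simp [PiLp.inner_apply, Fin.sum_univ_two, -inner_self_eq_norm_sq_to_K] <;>
      nlinarith
  have hspan := hon.linearIndependent.span_eq_top_of_card_eq_finrank (by simp)
  exact ⟨OrthonormalBasis.mk hon hspan.ge, by simp, by simp⟩

lemma exists_adapted_basis {p q : E2} (hdet : det2 p q ≠ 0) :
    ∃ (e : OrthonormalBasis (Fin 2) ℝ E2) (b h k : ℝ), 0 < b ∧ 0 < h ∧ 2 * h = ‖p - q‖ ∧
      2 * h * b = |det2 p q| ∧ p = b • e 0 + (k * b + h) • e 1 ∧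
      q = b • e 0 + (k * b - h) • e 1 := by
  set d := ‖p - q‖ with hd
  have hne : p - q ≠ 0 := by
    intro h
    obtain rfl := sub_eq_zero.1 h
    exact hdet (by unfold det2; ring)
  have hd0 : 0 < d := norm_pos_iff.2 hne
  obtain ⟨ε, hε, hεdet⟩ : ∃ ε : ℝ, ε ^ 2 = 1 ∧ -ε * det2 p q = |det2 p q| := by
    rcases le_total 0 (det2 p q) with h | h
    · exact ⟨-1, by norm_num, by rw [abs_of_nonneg h]; ring⟩
    · exact ⟨1, by norm_num, by rw [abs_of_nonpos h]; ring⟩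
  obtain ⟨e, he0, he1⟩ := exists_orthonormalBasis_of_norm_eq_one (v := d⁻¹ • (p - q))
    (by rw [norm_smul, norm_inv, norm_norm, ← hd, inv_mul_cancel₀ hd0.ne']) hε
  have hb : d * e.repr p 0 = |det2 p q| := by
    rw [e.repr_apply_apply, he0, ← hεdet]
    simp [PiLp.inner_apply, Fin.sum_univ_two, det2]
    field_simp
    ring
  have hbpos : 0 < e.repr p 0 := by
    have : 0 < d * e.repr p 0 := hb ▸ abs_pos.2 hdet
    exact pos_of_mul_pos_right this hd0.le
  have hpq : p - q = d • e 1 := by rw [he1, smul_inv_smul₀ hd0.ne']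
  have hq : q = p - d • e 1 := by rw [← hpq]; abel
  refine ⟨e, e.repr p 0, d / 2, (e.repr p 1 - d / 2) / e.repr p 0, hbpos, by linarith, by ring,
    by rw [← hb]; ring, ?_, ?_⟩
  · rw [div_mul_cancel₀ _ hbpos.ne', sub_add_cancel, ← eq_repr_smul]
  · rw [div_mul_cancel₀ _ hbpos.ne', hq]
    nth_rewrite 1 [eq_repr_smul e p]
    module

/-- The standard orthonormal basis of the plane. -/
abbrev stdBasis : OrthonormalBasis (Fin 2) ℝ E2 := EuclideanSpace.basisFun (Fin 2) ℝ

/-- Symmetrizing the hexagon `±p, ±q, ±(α p + β q)` in the direction of its short diagonal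
`p - q`. -/
lemma exists_symHex_le (F : Set E2 → EReal)
    (hiso : ∀ (f : E2 ≃ᵢ E2) (H : Set E2), Hex H → F (f '' H) = F H)
    (hsteiner : ∀ (v : E2) (c : ℝ) (H : Set E2), ‖v‖ = 1 → Hex H →
      Hex (steiner v c H) → F (steiner v c H) ≤ F H)
    {p q : E2} (hdet : det2 p q ≠ 0) {α β : ℝ} (hadd : 1 ≤ α + β) (hsub : |α - β| ≤ 1) :
    ∃ b h : ℝ, 0 < b ∧ 0 < h ∧ 2 * h = ‖p - q‖ ∧ 2 * h * b = |det2 p q| ∧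
      volume (hexHull p q (α • p + β • q)) = ENNReal.ofReal (2 * h * ((α + β) * b + b)) ∧
      F (symHex stdBasis ((α + β) * b) b h) ≤ F (hexHull p q (α • p + β • q)) := by
  obtain ⟨e, b, h, k, hb, hh, hnorm, hdet', hp, hq⟩ := exists_adapted_basis hdet
  refine ⟨b, h, hb, hh, hnorm, hdet', ?_⟩
  have hr : α • p + β • q = ((α + β) * b) • e 0 +
      (k * ((α + β) * b) + (α - β) * h) • e 1 := by
    rw [hp, hq]
    module
  have hab : b ≤ (α + β) * b := le_mul_of_one_le_left hb.le hadd
  have hz : |(α - β) * h| ≤ h := by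
    rw [abs_mul, abs_of_pos hh]
    exact mul_le_of_le_one_left hh.le hsub
  have hvol : volume (hexHull p q (α • p + β • q)) =
      ENNReal.ofReal (2 * h * ((α + β) * b + b)) := by
    rw [hr]
    nth_rewrite 1 [hp, hq]
    rw [volume_hexHull_eq_volume_symHex e k hab hb hh hz, volume_symHex e hab hb hh]
  have hst : steiner (e 1) 0 (hexHull p q (α • p + β • q)) =
      symHex e ((α + β) * b) b h := by
    rw [hr]
    nth_rewrite 1 [hp, hq]
    exact steiner_hexHull e k hab hb hh hz
  have hhex : Hex (hexHull p q (α • p + β • q)) := by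
    apply hex_hexHull
    rw [hvol]
    have : 0 < 2 * h * ((α + β) * b + b) := by
      have : 0 < (α + β) * b + b := by linarith
      positivity
    simpa using this
  refine ⟨hvol, ?_⟩
  calc F (symHex stdBasis ((α + β) * b) b h)
      = F (symHex e ((α + β) * b) b h) := by
        rw [symHex_eq_image e]
        exact (hiso e.repr.symm.toIsometryEquiv _ (hex_symHex stdBasis hab hb hh)).symm
    _ ≤ F (hexHull p q (α • p + β • q)) := by
        rw [← hst]
        exact hsteiner _ _ _ (e.orthonormal.1 1) hhex (hst ▸ hex_symHex e hab hb hh)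

lemma hexHull_congr {p q r p' q' r' : E2}
    (h : ({p, q, r, -p, -q, -r} : Set E2) = {p', q', r', -p', -q', -r'}) :
    hexHull p q r = hexHull p' q' r' := by
  rw [hexHull, hexHull, h]

lemma hexHull_rotate (p q r : E2) : hexHull p q r = hexHull q r p :=
  hexHull_congr (by ext; simp only [mem_insert_iff, mem_singleton_iff]; tauto)

lemma hexHull_neg_left (p q r : E2) : hexHull (-p) q r = hexHull p q r :=
  hexHull_congr (by ext; simp only [mem_insert_iff, mem_singleton_iff, neg_neg]; tauto)

lemma hexHull_neg_mid (p q r : E2) : hexHull p (-q) r = hexHull p q r :=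
  hexHull_congr (by ext; simp only [mem_insert_iff, mem_singleton_iff, neg_neg]; tauto)

/-- `K` is the hull of `±p, ±q, ±(α p + β q)`, with these points in convex position. -/
def IsConvexPosition (K : Set E2) : Prop :=
  ∃ (p q : E2) (α β : ℝ), det2 p q ≠ 0 ∧ 1 ≤ α + β ∧ |α - β| ≤ 1 ∧
    K = hexHull p q (α • p + β • q)

lemma isConvexPosition_of_nonneg {p q : E2} (hdet : det2 p q ≠ 0) {α β : ℝ} (hα₀ : 0 ≤ α)
    (hα₁ : α ≤ 1) (hβ₀ : 0 ≤ β) (hβ₁ : β ≤ 1) :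
    IsConvexPosition (hexHull p q (α • p + β • q)) := by
  rcases le_total 1 (α + β) with h | h
  · exact ⟨p, q, α, β, hdet, h, abs_le.2 ⟨by linarith, by linarith⟩, rfl⟩
  · refine ⟨p, q, 1, 0, hdet, by norm_num, by norm_num, ?_⟩
    rw [one_smul, zero_smul, add_zero]
    set S : Set E2 := {p, q, p, -p, -q, -p} with hS
    have hconv := convex_convexHull ℝ S
    have hsub : S ⊆ convexHull ℝ S := subset_convexHull ℝ S
    have hcomb : ∀ x ∈ S, ∀ y ∈ S, -x ∈ S → α • x + β • y ∈ convexHull ℝ S := by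
      intro x hx y hy hx'
      have hzero : (0 : E2) ∈ convexHull ℝ S := by
        have := hconv (hsub hx) (hsub hx') (a := 1 / 2) (b := 1 / 2) (by norm_num)
          (by norm_num) (by norm_num)
        simpa using this
      have h3 := hconv.sum_mem (t := Finset.univ) (w := ![α, β, 1 - α - β]) (z := ![x, y, 0])
        (by intro i _; fin_cases i <;> simp <;> linarith)
        (by simp [Fin.sum_univ_three])
        (by intro i _; fin_cases i
            · exact hsub hx
            · exact hsub hy
            · exact hzero)
      simpa [Fin.sum_univ_three] using h3
    apply Subset.antisymm
    · refine convexHull_min ?_ hconv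
      rintro x (rfl | rfl | rfl | rfl | rfl | rfl)
      · exact hsub (by simp [hS])
      · exact hsub (by simp [hS])
      · exact hcomb _ (by simp [hS]) _ (by simp [hS]) (by simp [hS])
      · exact hsub (by simp [hS])
      · exact hsub (by simp [hS])
      · have hneg : -(α • p + β • q) = α • -p + β • -q := by module
        rw [hneg]
        exact hcomb _ (by simp [hS]) _ (by simp [hS]) (by simp [hS])
    · refine convexHull_mono ?_
      rintro x (rfl | rfl | rfl | rfl | rfl | rfl) <;> simp

lemma isConvexPosition_of_abs_le_one {p q : E2} (hdet : det2 p q ≠ 0) {α β : ℝ}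
    (hα : |α| ≤ 1) (hβ : |β| ≤ 1) :
    IsConvexPosition (hexHull p q (α • p + β • q)) := by
  obtain ⟨hα₁, hα₂⟩ := abs_le.1 hα
  obtain ⟨hβ₁, hβ₂⟩ := abs_le.1 hβ
  have hdet₁ : det2 (-p) q ≠ 0 := by
    contrapose! hdet
    simp only [det2, PiLp.neg_apply] at *
    linarith
  have hdet₂ : det2 p (-q) ≠ 0 := by
    contrapose! hdet
    simp only [det2, PiLp.neg_apply] at *
    linarith
  have hdet₃ : det2 (-p) (-q) ≠ 0 := by
    contrapose! hdet
    simp only [det2, PiLp.neg_apply] at *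
    linarith
  rcases le_total 0 α with h₁ | h₁ <;> rcases le_total 0 β with h₂ | h₂
  · exact isConvexPosition_of_nonneg hdet h₁ hα₂ h₂ hβ₂
  · have := isConvexPosition_of_nonneg hdet₂ h₁ hα₂ (β := -β) (by linarith) (by linarith)
    rwa [hexHull_neg_mid, neg_smul_neg] at this
  · have := isConvexPosition_of_nonneg hdet₁ (α := -α) (by linarith) (by linarith) h₂ hβ₂
    rwa [hexHull_neg_left, neg_smul_neg] at this
  · have := isConvexPosition_of_nonneg hdet₃ (α := -α) (by linarith) (by linarith) (β := -β)
      (by linarith) (by linarith)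
    rwa [hexHull_neg_left, hexHull_neg_mid, neg_smul_neg, neg_smul_neg] at this

lemma isConvexPosition_of_det2_maximal {p q r : E2} (hdet : det2 p q ≠ 0)
    (h₁ : |det2 r q| ≤ |det2 p q|) (h₂ : |det2 p r| ≤ |det2 p q|) :
    IsConvexPosition (hexHull p q r) := by
  have hr : r = (det2 r q / det2 p q) • p + (det2 p r / det2 p q) • q := by
    ext i
    fin_cases i <;> simp <;> field_simp <;> unfold det2 <;> ring
  rw [hr]
  refine isConvexPosition_of_abs_le_one hdet ?_ ?_ <;>
    rw [abs_div] <;> exact div_le_one_of_le₀ (by assumption) (abs_nonneg _)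

lemma volume_hexHull_eq_zero {n p q r : E2} (hn : n ≠ 0) (hp : det2 n p = 0) (hq : det2 n q = 0)
    (hr : det2 n r = 0) : volume (hexHull p q r) = 0 := by
  let ℓ : E2 →ₗ[ℝ] ℝ :=
    { toFun := det2 n
      map_add' := fun x y => by simp only [det2, PiLp.add_apply]; ring
      map_smul' := fun c x => by
        simp only [det2, PiLp.smul_apply, smul_eq_mul, RingHom.id_apply]; ring }
  have htop : LinearMap.ker ℓ ≠ ⊤ := by
    intro h
    apply hn
    have h0 : det2 n !₂[1, 0] = 0 := by
      change ℓ _ = 0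
      rw [← LinearMap.mem_ker, h]
      trivial
    have h1 : det2 n !₂[0, 1] = 0 := by
      change ℓ _ = 0
      rw [← LinearMap.mem_ker, h]
      trivial
    ext i
    fin_cases i
    · simpa [det2] using h1
    · simpa [det2] using h0
  refine measure_mono_null ?_ (Measure.addHaar_submodule volume (LinearMap.ker ℓ) htop)
  refine convexHull_min ?_ (LinearMap.ker ℓ).convex
  have hp' : p ∈ LinearMap.ker ℓ := hp
  have hq' : q ∈ LinearMap.ker ℓ := hq
  have hr' : r ∈ LinearMap.ker ℓ := hr
  rintro x (rfl | rfl | rfl | rfl | rfl | rfl)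
  exacts [hp', hq', hr', neg_mem hp', neg_mem hq', neg_mem hr']

lemma isConvexPosition_hexHull {p q r : E2} (hvol : volume (hexHull p q r) ≠ 0) :
    IsConvexPosition (hexHull p q r) := by
  have hswap : ∀ x y : E2, |det2 x y| = |det2 y x| := fun x y => by
    rw [← abs_neg]
    congr 1
    unfold det2
    ring
  have hself : ∀ x : E2, det2 x x = 0 := fun x => by unfold det2; ring
  have hnonzero : det2 p q ≠ 0 ∨ det2 q r ≠ 0 ∨ det2 r p ≠ 0 := by
    by_contra! h
    obtain ⟨hpq, hqr, hrp⟩ := h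
    have hanti : ∀ x y : E2, det2 x y = 0 → det2 y x = 0 := fun x y h => by
      rw [← abs_eq_zero, hswap, h, abs_zero]
    apply hvol
    by_cases hp : p = 0
    · by_cases hq : q = 0
      · by_cases hr : r = 0
        · have hz : ∀ n : E2, det2 n 0 = 0 := fun n => by simp [det2]
          subst hp hq hr
          refine volume_hexHull_eq_zero (n := !₂[1, 0]) (fun h => ?_) (hz _) (hz _) (hz _)
          simpa using congrArg (fun x : E2 => x 0) h
        · exact volume_hexHull_eq_zero hr hrp (hanti _ _ hqr) (hself r)
      · exact volume_hexHull_eq_zero hq (hanti _ _ hpq) (hself q) hqr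
    · exact volume_hexHull_eq_zero hp (hself p) hpq (hanti _ _ hrp)
  have hmax : ∀ x y z : E2, (det2 x y ≠ 0 ∨ det2 y z ≠ 0 ∨ det2 z x ≠ 0) →
      |det2 y z| ≤ |det2 x y| → |det2 z x| ≤ |det2 x y| → IsConvexPosition (hexHull x y z) := by
    intro x y z hnz h₁ h₂
    refine isConvexPosition_of_det2_maximal ?_ (by rwa [hswap]) (by rwa [hswap x z])
    intro h0
    simp only [h0, abs_zero, abs_nonpos_iff, ne_eq, not_true_eq_false, false_or] at hnz h₁ h₂
    tauto
  rcases le_total |det2 p q| |det2 q r| with h₁ | h₁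
  · rcases le_total |det2 q r| |det2 r p| with h₂ | h₂
    · rw [hexHull_rotate, hexHull_rotate]
      exact hmax _ _ _ (by tauto) (h₁.trans h₂) h₂
    · rw [hexHull_rotate]
      exact hmax _ _ _ (by tauto) h₂ h₁
  · rcases le_total |det2 p q| |det2 r p| with h₂ | h₂
    · rw [hexHull_rotate, hexHull_rotate]
      exact hmax _ _ _ (by tauto) h₂ (h₁.trans h₂)
    · exact hmax _ _ _ hnonzero h₁ h₂

lemma hexHull_subset_cthickening (p q r p' q' r' : E2) :
    hexHull p q r ⊆ cthickening (‖p - p'‖ + ‖q - q'‖ + ‖r - r'‖) (hexHull p' q' r') := by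
  set δ := ‖p - p'‖ + ‖q - q'‖ + ‖r - r'‖ with hδ
  have hp := norm_nonneg (p - p')
  have hq := norm_nonneg (q - q')
  have hr := norm_nonneg (r - r')
  have hmem : ∀ x x' : E2, x' ∈ hexHull p' q' r' → ‖x - x'‖ ≤ δ →
      x ∈ cthickening δ (hexHull p' q' r') := fun x x' hx' hle =>
    mem_cthickening_of_dist_le x x' δ _ hx' (by rwa [dist_eq_norm])
  have hvert : ({p', q', r', -p', -q', -r'} : Set E2) ⊆ hexHull p' q' r' := subset_convexHull ℝ _
  have hneg : ∀ x y : E2, ‖-x - -y‖ = ‖x - y‖ := fun x y => by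
    rw [neg_sub_neg, norm_sub_rev]
  refine convexHull_min ?_ ((convex_convexHull ℝ _).cthickening δ)
  rintro x (rfl | rfl | rfl | rfl | rfl | rfl)
  · exact hmem _ p' (hvert (by simp)) (by linarith)
  · exact hmem _ q' (hvert (by simp)) (by linarith)
  · exact hmem _ r' (hvert (by simp)) (by linarith)
  · exact hmem _ (-p') (hvert (by simp)) (by rw [hneg]; linarith)
  · exact hmem _ (-q') (hvert (by simp)) (by rw [hneg]; linarith)
  · exact hmem _ (-r') (hvert (by simp)) (by rw [hneg]; linarith)

lemma hausdorffTendsto_hexHull {P Q R : ℕ → E2} {p q r : E2} (hP : Tendsto P atTop (𝓝 p))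
    (hQ : Tendsto Q atTop (𝓝 q)) (hR : Tendsto R atTop (𝓝 r)) :
    HausdorffTendsto (fun n => hexHull (P n) (Q n) (R n)) (hexHull p q r) := by
  have hlim : Tendsto (fun n => ENNReal.ofReal (‖P n - p‖ + ‖Q n - q‖ + ‖R n - r‖)) atTop
      (𝓝 0) := by
    have h := ENNReal.tendsto_ofReal (((tendsto_iff_norm_sub_tendsto_zero.1 hP).add
      (tendsto_iff_norm_sub_tendsto_zero.1 hQ)).add (tendsto_iff_norm_sub_tendsto_zero.1 hR))
    simpa using h
  refine tendsto_of_tendsto_of_tendsto_of_le_of_le tendsto_const_nhds hlim (fun _ => zero_le)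
    fun n => Metric.hausdorffEDist_le_of_infEDist (fun x hx => ?_) (fun x hx => ?_)
  · exact mem_cthickening_iff.1 (hexHull_subset_cthickening _ _ _ p q r hx)
  · have := mem_cthickening_iff.1 (hexHull_subset_cthickening _ _ _ (P n) (Q n) (R n) hx)
    rwa [norm_sub_rev p, norm_sub_rev q, norm_sub_rev r] at this

lemma tendsto_of_contraction {u : ℕ → ℝ} {L c : ℝ} (hc₀ : 0 ≤ c) (hc₁ : c < 1)
    (h : ∀ n, |u (n + 1) - L| ≤ c * |u n - L|) : Tendsto u atTop (𝓝 L) := by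
  have hbound : ∀ n, |u n - L| ≤ c ^ n * |u 0 - L| := by
    intro n
    induction n with
    | zero => simp
    | succ n ih =>
      calc |u (n + 1) - L| ≤ c * |u n - L| := h n
        _ ≤ c * (c ^ n * |u 0 - L|) := mul_le_mul_of_nonneg_left ih hc₀
        _ = c ^ (n + 1) * |u 0 - L| := by ring
  rw [tendsto_iff_norm_sub_tendsto_zero]
  have hlim := (tendsto_pow_atTop_nhds_zero_of_lt_one hc₀ hc₁).mul_const |u 0 - L|
  rw [zero_mul] at hlim
  exact squeeze_zero (fun _ => norm_nonneg _) hbound hlim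

lemma tendsto_ratio {γ : ℕ → ℝ} (h₀ : 1 ≤ γ 0) (hstep : ∀ n, γ (n + 1) = 1 + 2 / γ n) :
    Tendsto γ atTop (𝓝 2) := by
  have h₁ : ∀ n, 1 ≤ γ n := by
    intro n
    induction n with
    | zero => exact h₀
    | succ n ih =>
      rw [hstep]
      have : 0 ≤ 2 / γ n := by positivity
      linarith
  have h₂ : ∀ n, γ (n + 1) ≤ 3 := by
    intro n
    have : 2 / γ n ≤ 2 := div_le_self (by norm_num) (h₁ n)
    rw [hstep]
    linarith
  have h₃ : ∀ n, 5 / 3 ≤ γ (n + 2) := by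
    intro n
    have hpos : 0 < γ (n + 1) := by linarith [h₁ (n + 1)]
    have : 2 / 3 ≤ 2 / γ (n + 1) := div_le_div_of_nonneg_left (by norm_num) hpos (h₂ n)
    rw [hstep (n + 1)]
    linarith
  rw [← tendsto_add_atTop_iff_nat 2]
  refine tendsto_of_contraction (c := 3 / 5) (by norm_num) (by norm_num) fun n => ?_
  have hpos : 0 < γ (n + 2) := by linarith [h₃ n]
  have heq : γ (n + 1 + 2) - 2 = -(γ (n + 2) - 2) / γ (n + 2) := by
    rw [show n + 1 + 2 = n + 2 + 1 by ring, hstep (n + 2)]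
    field_simp
    ring
  rw [heq, abs_div, abs_neg, abs_of_pos hpos, div_le_iff₀ hpos]
  nlinarith [abs_nonneg (γ (n + 2) - 2), h₃ n]

lemma tendsto_height_sq {t : ℕ → ℝ} {T : ℝ} (hT : 0 < T) (hT' : T ^ 2 = 1 / 12) (h₀ : 0 < t 0)
    (hstep : ∀ n, t (n + 1) = 1 / (16 * t n) + t n / 4) : Tendsto t atTop (𝓝 T) := by
  have hpos : ∀ n, 0 < t n := by
    intro n
    induction n with
    | zero => exact h₀
    | succ n ih =>
      rw [hstep]
      positivity
  have hlow : ∀ n, 1 / 4 ≤ t (n + 1) := by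
    intro n
    have hn := hpos n
    have : t (n + 1) - 1 / 4 = (1 - 2 * t n) ^ 2 / (16 * t n) := by
      rw [hstep]
      field_simp
      ring
    have : 0 ≤ (1 - 2 * t n) ^ 2 / (16 * t n) := by positivity
    linarith
  have hTlow : 28 / 100 ≤ T := by nlinarith
  rw [← tendsto_add_atTop_iff_nat 1]
  refine tendsto_of_contraction (c := 7 / 10) (by norm_num) (by norm_num) fun n => ?_
  have hn := hpos (n + 1)
  have heq : t (n + 1 + 1) - T = (1 / 4 - 1 / (16 * t (n + 1) * T)) * (t (n + 1) - T) := by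
    have hTfix : T = 1 / (16 * T) + T / 4 := by
      field_simp
      nlinarith
    rw [hstep (n + 1)]
    nth_rewrite 1 [hTfix]
    field_simp
    ring
  rw [heq, abs_mul]
  refine mul_le_mul_of_nonneg_right ?_ (abs_nonneg _)
  have hle : 1 / (16 * t (n + 1) * T) ≤ 9 / 10 := by
    rw [div_le_iff₀ (by positivity)]
    nlinarith [mul_le_mul (hlow n) hTlow (by norm_num) hn.le]
  have hge : 0 ≤ 1 / (16 * t (n + 1) * T) := by positivity
  rw [abs_le]
  constructor <;> linarith

/-- The half-width of the rectangle in the unit-area hexagon of ratio `γ` and squared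
height `t`. -/
def baseWidth (γ t : ℝ) : ℝ := 1 / (2 * √t * (1 + γ))

/-- The unit-area axis-symmetric hexagon with ratio `a / b = γ` and squared height `t`. -/
def unitHex (γ t : ℝ) : Set E2 :=
  symHex stdBasis (γ * baseWidth γ t) (baseWidth γ t) (√t)

lemma baseWidth_pos {γ t : ℝ} (hγ : 1 ≤ γ) (ht : 0 < t) : 0 < baseWidth γ t := by
  have := Real.sqrt_pos.2 ht
  unfold baseWidth
  positivity

lemma hex_unitHex {γ t : ℝ} (hγ : 1 ≤ γ) (ht : 0 < t) : Hex (unitHex γ t) :=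
  hex_symHex _ (le_mul_of_one_le_left (baseWidth_pos hγ ht).le hγ) (baseWidth_pos hγ ht)
    (Real.sqrt_pos.2 ht)

lemma unitHex_eq_symHex {γ b h : ℝ} (hγ : 1 ≤ γ) (hh : 0 < h) (harea : 2 * h * (γ * b + b) = 1) :
    unitHex γ (h ^ 2) = symHex stdBasis (γ * b) b h := by
  have hb : baseWidth γ (h ^ 2) = b := by
    rw [baseWidth, Real.sqrt_sq hh.le]
    field_simp
    linarith
  rw [unitHex, hb, Real.sqrt_sq hh.le]

lemma unitHex_step_le (F : Set E2 → EReal)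
    (hiso : ∀ (f : E2 ≃ᵢ E2) (H : Set E2), Hex H → F (f '' H) = F H)
    (hsteiner : ∀ (v : E2) (c : ℝ) (H : Set E2), ‖v‖ = 1 → Hex H →
      Hex (steiner v c H) → F (steiner v c H) ≤ F H)
    {γ t : ℝ} (hγ : 1 ≤ γ) (ht : 0 < t) :
    F (unitHex (1 + 2 / γ) (1 / (16 * t) + t / 4)) ≤ F (unitHex γ t) := by
  set b := baseWidth γ t with hbdef
  have hb : 0 < b := baseWidth_pos hγ ht
  have hs : 0 < √t := Real.sqrt_pos.2 ht
  have hs2 : √t ^ 2 = t := Real.sq_sqrt ht.le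
  have hγ0 : 0 < γ := by linarith
  have harea : 2 * √t * (1 + γ) * b = 1 := by
    rw [hbdef, baseWidth]
    field_simp
  set p : E2 := (γ * b) • stdBasis 0 with hp
  set q : E2 := -(b • stdBasis 0 + √t • stdBasis 1) with hq
  have hdet : det2 p q = -(γ * b * √t) := by
    simp [det2, hp, hq]
  have hr : (2 / γ) • p + (1 : ℝ) • q = b • stdBasis 0 - √t • stdBasis 1 := by
    rw [hp, hq, smul_smul, show 2 / γ * (γ * b) = 2 * b by field_simp]
    module
  have hsame : unitHex γ t = hexHull p q ((2 / γ) • p + (1 : ℝ) • q) := by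
    rw [hr, unitHex, symHex, hq, hexHull_neg_mid, hexHull_rotate, hexHull_rotate]
  have h2γ : 0 < 2 / γ := by positivity
  have h2γ' : 2 / γ ≤ 2 := div_le_self (by norm_num) hγ
  obtain ⟨b', h', hb', hh', hnorm, hdet', -, hle⟩ := exists_symHex_le F hiso hsteiner
    (p := p) (q := q) (by rw [hdet]; exact neg_ne_zero.2 (by positivity)) (α := 2 / γ) (β := 1)
    (by linarith) (abs_le.2 ⟨by linarith, by linarith⟩)
  have hpq : ‖p - q‖ ^ 2 = ((1 + γ) * b) ^ 2 + t := by
    rw [EuclideanSpace.real_norm_sq_eq, Fin.sum_univ_two]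
    simp [hp, hq]
    rw [hs2]
    ring
  have hh2 : h' ^ 2 = 1 / (16 * t) + t / 4 := by
    have h4 : 4 * h' ^ 2 = ((1 + γ) * b) ^ 2 + t := by
      rw [← hpq, ← hnorm]
      ring
    have hw : ((1 + γ) * b) ^ 2 = 1 / (4 * t) := by
      rw [eq_div_iff (by positivity), ← hs2]
      linear_combination (2 * √t * (1 + γ) * b + 1) * harea
    rw [hw] at h4
    field_simp at h4 ⊢
    linarith
  have harea' : 2 * h' * ((1 + 2 / γ) * b' + b') = 1 := by
    rw [hdet, abs_neg, abs_of_pos (by positivity)] at hdet'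
    have : 2 * h' * ((1 + 2 / γ) * b' + b') = 2 * h' * b' * (2 + 2 / γ) := by ring
    rw [this, hdet']
    field_simp
    linarith
  rw [← hh2, unitHex_eq_symHex (by linarith) hh' harea', hsame]
  rwa [add_comm (2 / γ) 1] at hle

lemma exists_unitHex_le (F : Set E2 → EReal)
    (hiso : ∀ (f : E2 ≃ᵢ E2) (H : Set E2), Hex H → F (f '' H) = F H)
    (hsteiner : ∀ (v : E2) (c : ℝ) (H : Set E2), ‖v‖ = 1 → Hex H →
      Hex (steiner v c H) → F (steiner v c H) ≤ F H)
    {H : Set E2} (hH : Hex H) (hvol : volume H = 1) :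
    ∃ γ t : ℝ, 1 ≤ γ ∧ 0 < t ∧ F (unitHex γ t) ≤ F H := by
  obtain ⟨⟨x₀, p, q, r, hHeq⟩, -⟩ := hH
  have hvol' : volume (hexHull p q r) = 1 := by
    rw [← hvol, hHeq, image_add_left, measure_preimage_add, hexHull]
  have hFH : F H = F (hexHull p q r) := by
    rw [hHeq]
    exact hiso (IsometryEquiv.addLeft x₀) _ (hex_hexHull (by rw [hvol']; exact one_ne_zero))
  obtain ⟨p', q', α, β, hdet, hadd, hsub, heq⟩ :=
    isConvexPosition_hexHull (p := p) (q := q) (r := r) (by rw [hvol']; exact one_ne_zero)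
  obtain ⟨b, h, hb, hh, -, -, harea, hle⟩ := exists_symHex_le F hiso hsteiner hdet hadd hsub
  rw [← heq, hvol', eq_comm, ENNReal.ofReal_eq_one] at harea
  refine ⟨α + β, h ^ 2, hadd, by positivity, ?_⟩
  rw [unitHex_eq_symHex hadd hh harea, hFH, heq]
  exact hle

lemma hausdorffTendsto_unitHex {γ t : ℕ → ℝ} {g T : ℝ} (hg : 1 ≤ g) (hT : 0 < T)
    (hγ : Tendsto γ atTop (𝓝 g)) (ht : Tendsto t atTop (𝓝 T)) :
    HausdorffTendsto (fun n => unitHex (γ n) (t n)) (unitHex g T) := by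
  have hs : Tendsto (fun n => √(t n)) atTop (𝓝 (√T)) := (Real.continuous_sqrt.tendsto T).comp ht
  have hs0 : 0 < √T := Real.sqrt_pos.2 hT
  have hb : Tendsto (fun n => baseWidth (γ n) (t n)) atTop (𝓝 (baseWidth g T)) :=
    tendsto_const_nhds.div ((hs.const_mul 2).mul (hγ.const_add 1)) (by positivity)
  exact hausdorffTendsto_hexHull ((hb.smul_const _).add (hs.smul_const _))
    ((hb.smul_const _).sub (hs.smul_const _)) ((hγ.mul hb).smul_const _)

lemma unitHex_limit_le (F : Set E2 → EReal)
    (hiso : ∀ (f : E2 ≃ᵢ E2) (H : Set E2), Hex H → F (f '' H) = F H)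
    (hlsc : ∀ (Hn : ℕ → Set E2) (H : Set E2), (∀ n, Hex (Hn n)) → Hex H →
      HausdorffTendsto Hn H → F H ≤ liminf (fun n => F (Hn n)) atTop)
    (hsteiner : ∀ (v : E2) (c : ℝ) (H : Set E2), ‖v‖ = 1 → Hex H →
      Hex (steiner v c H) → F (steiner v c H) ≤ F H)
    {γ t T : ℝ} (hγ : 1 ≤ γ) (ht : 0 < t) (hT : 0 < T) (hT' : T ^ 2 = 1 / 12) :
    F (unitHex 2 T) ≤ F (unitHex γ t) := by
  set u : ℕ → ℝ := fun n => (fun x : ℝ => 1 + 2 / x)^[n] γ with hu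
  set s : ℕ → ℝ := fun n => (fun x : ℝ => 1 / (16 * x) + x / 4)^[n] t with hs
  have hu_succ : ∀ n, u (n + 1) = 1 + 2 / u n := fun n => Function.iterate_succ_apply' _ n γ
  have hs_succ : ∀ n, s (n + 1) = 1 / (16 * s n) + s n / 4 := fun n =>
    Function.iterate_succ_apply' _ n t
  have hbound : ∀ n, 1 ≤ u n ∧ 0 < s n ∧ F (unitHex (u n) (s n)) ≤ F (unitHex γ t) := by
    intro n
    induction n with
    | zero => exact ⟨hγ, ht, le_rfl⟩
    | succ n ih =>
      obtain ⟨h₁, h₂, h₃⟩ := ih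
      rw [hu_succ, hs_succ]
      have : 0 ≤ 2 / u n := by positivity
      exact ⟨by linarith, by positivity, (unitHex_step_le F hiso hsteiner h₁ h₂).trans h₃⟩
  have hlim := hausdorffTendsto_unitHex one_le_two hT (tendsto_ratio (γ := u) hγ hu_succ)
    (tendsto_height_sq hT hT' (t := s) ht hs_succ)
  calc F (unitHex 2 T) ≤ liminf (fun n => F (unitHex (u n) (s n))) atTop :=
        hlsc _ _ (fun n => hex_unitHex (hbound n).1 (hbound n).2.1) (hex_unitHex one_le_two hT) hlim
    _ ≤ liminf (fun _ : ℕ => F (unitHex γ t)) atTop :=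
        liminf_le_liminf (Eventually.of_forall fun n => (hbound n).2.2)
    _ = F (unitHex γ t) := liminf_const _

lemma hexVertex_eq (k : ℕ) : hexVertex k = !₂[Real.cos (k * π / 3), Real.sin (k * π / 3)] := rfl

lemma stdHexagon_eq_symHex : stdHexagon = symHex stdBasis 1 (1 / 2) (√3 / 2) := by
  have c2 : Real.cos (2 * π / 3) = -(1 / 2) := by
    rw [show 2 * π / 3 = π - π / 3 by ring, Real.cos_pi_sub, Real.cos_pi_div_three]
  have s2 : Real.sin (2 * π / 3) = √3 / 2 := by
    rw [show 2 * π / 3 = π - π / 3 by ring, Real.sin_pi_sub, Real.sin_pi_div_three]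
  have c4 : Real.cos (4 * π / 3) = -(1 / 2) := by
    rw [show 4 * π / 3 = π / 3 + π by ring, Real.cos_add_pi, Real.cos_pi_div_three]
  have s4 : Real.sin (4 * π / 3) = -(√3 / 2) := by
    rw [show 4 * π / 3 = π / 3 + π by ring, Real.sin_add_pi, Real.sin_pi_div_three]
  have c5 : Real.cos (5 * π / 3) = 1 / 2 := by
    rw [show 5 * π / 3 = 2 * π - π / 3 by ring, Real.cos_two_pi_sub, Real.cos_pi_div_three]
  have s5 : Real.sin (5 * π / 3) = -(√3 / 2) := by
    rw [show 5 * π / 3 = 2 * π - π / 3 by ring, Real.sin_two_pi_sub, Real.sin_pi_div_three]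
  have hstd : ∀ x y : ℝ, !₂[x, y] = x • stdBasis 0 + y • stdBasis 1 := fun x y => by
    rw [← repr_add_smul stdBasis x y]
    rfl
  have v0 : hexVertex 0 = (1 : ℝ) • stdBasis 0 := by
    rw [hexVertex_eq, hstd]; simp
  have v1 : hexVertex 1 = (1 / 2 : ℝ) • stdBasis 0 + (√3 / 2) • stdBasis 1 := by
    rw [hexVertex_eq, hstd, Nat.cast_one, one_mul, Real.cos_pi_div_three, Real.sin_pi_div_three]
  have v2 : hexVertex 2 = -((1 / 2 : ℝ) • stdBasis 0 - (√3 / 2) • stdBasis 1) := by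
    rw [hexVertex_eq, hstd, Nat.cast_ofNat, c2, s2]; module
  have v3 : hexVertex 3 = -((1 : ℝ) • stdBasis 0) := by
    rw [hexVertex_eq, hstd, Nat.cast_ofNat, show 3 * π / 3 = π by ring, Real.cos_pi, Real.sin_pi]
    module
  have v4 : hexVertex 4 = -((1 / 2 : ℝ) • stdBasis 0 + (√3 / 2) • stdBasis 1) := by
    rw [hexVertex_eq, hstd, Nat.cast_ofNat, c4, s4]; module
  have v5 : hexVertex 5 = (1 / 2 : ℝ) • stdBasis 0 - (√3 / 2) • stdBasis 1 := by
    rw [hexVertex_eq, hstd, Nat.cast_ofNat, c5, s5]; module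
  rw [stdHexagon, symHex, hexHull, ← v4, ← v2, ← v3, ← v1, ← v5, ← v0]
  congr 1
  ext x
  simp only [mem_range, mem_insert_iff, mem_singleton_iff]
  constructor
  · rintro ⟨k, rfl⟩
    fin_cases k <;> simp
  · rintro (rfl | rfl | rfl | rfl | rfl | rfl)
    exacts [⟨1, rfl⟩, ⟨5, rfl⟩, ⟨0, rfl⟩, ⟨4, rfl⟩, ⟨2, rfl⟩, ⟨3, rfl⟩]

lemma smul_image_symHex (e : OrthonormalBasis (Fin 2) ℝ E2) (σ a b h : ℝ) :
    (fun x : E2 => σ • x) '' symHex e a b h = symHex e (σ * a) (σ * b) (σ * h) := by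
  have himg := LinearMap.image_convexHull (σ • LinearMap.id : E2 →ₗ[ℝ] E2)
    {b • e 0 + h • e 1, b • e 0 - h • e 1, a • e 0, -(b • e 0 + h • e 1),
      -(b • e 0 - h • e 1), -(a • e 0)}
  refine Eq.trans himg ?_
  simp [symHex, hexHull, image_insert_eq, smul_smul, smul_sub]

lemma exists_isometryEquiv_of_isSimilarity {f : E2 → E2} (hf : IsSimilarity f) :
    ∃ (σ : ℝ) (g : E2 ≃ᵢ E2), 0 < σ ∧ (∀ S : Set E2, volume (g '' S) = volume S) ∧
      ∀ x, f x = g (σ • x) := by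
  obtain ⟨σ, hσ, hdist⟩ := hf
  have hiso : Isometry (fun x : E2 => f (σ⁻¹ • x)) := by
    refine Isometry.of_dist_eq fun x y => ?_
    rw [hdist, dist_smul₀, norm_inv, Real.norm_of_nonneg hσ.le, mul_inv_cancel_left₀ hσ.ne']
  let A : E2 ≃ᵃⁱ[ℝ] E2 := hiso.affineIsometryOfStrictConvexSpace.toAffineIsometryEquiv rfl
  have hA : ∀ x, A x = f (σ⁻¹ • x) := fun x => rfl
  refine ⟨σ, A.toIsometryEquiv, hσ, fun S => ?_, fun x => ?_⟩
  · have hmap : ∀ x, A x = A 0 + A.linearIsometryEquiv x := fun x => by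
      have := A.map_vadd 0 x
      simp only [vadd_eq_add, add_zero] at this
      rw [this, add_comm]
    have himage : A.toIsometryEquiv '' S =
        (fun x => A 0 + x) '' (A.linearIsometryEquiv '' S) := by
      rw [image_image]
      exact image_congr fun x _ => hmap x
    rw [himage, image_add_left, measure_preimage_add]
    have := A.linearIsometryEquiv.symm.measurePreserving.measure_preimage_equiv
      (f := A.linearIsometryEquiv.symm.toMeasurableEquiv) S
    rw [← this]
    congr 1
    exact A.linearIsometryEquiv.toEquiv.image_eq_preimage_symm S
  · change f x = A (σ • x)
    rw [hA, inv_smul_smul₀ hσ.ne']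

/-- A unit-area regular hexagon is isometric to the limit of the symmetrization process. -/
lemma exists_eq_image_unitHex {K : Set E2} (hreg : IsRegularHexagon K) (hvol : volume K = 1) :
    ∃ (g : E2 ≃ᵢ E2) (T : ℝ), 0 < T ∧ T ^ 2 = 1 / 12 ∧ K = g '' unitHex 2 T := by
  obtain ⟨f, hf, rfl⟩ := hreg
  obtain ⟨σ, g, hσ, hg, hfg⟩ := exists_isometryEquiv_of_isSimilarity hf
  have himage : f '' stdHexagon = g '' symHex stdBasis (σ * 1) (σ * (1 / 2)) (σ * (√3 / 2)) := by
    rw [← smul_image_symHex, ← stdHexagon_eq_symHex, image_image]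
    exact image_congr fun x _ => hfg x
  have h3 : 0 < √3 := Real.sqrt_pos.2 (by norm_num)
  have h3' : √3 ^ 2 = 3 := Real.sq_sqrt (by norm_num)
  have hh : 0 < σ * (√3 / 2) := by positivity
  rw [himage, hg, volume_symHex stdBasis (by linarith) (by linarith) hh,
    ENNReal.ofReal_eq_one] at hvol
  refine ⟨g, (σ * (√3 / 2)) ^ 2, by positivity, ?_, ?_⟩
  · have hsq : (3 * √3 / 2 * σ ^ 2) ^ 2 = 1 := by
      rw [show 3 * √3 / 2 * σ ^ 2 = 1 by linarith, one_pow]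
    have h27 : σ ^ 4 * 27 = 4 := by
      linear_combination 4 * hsq - 9 * σ ^ 4 * h3'
    have : ((σ * (√3 / 2)) ^ 2) ^ 2 = σ ^ 4 * (√3 ^ 2) ^ 2 / 16 := by ring
    rw [this, h3']
    linarith
  · rw [himage, unitHex_eq_symHex (b := σ * (1 / 2)) one_le_two hh (by linarith)]
    congr 2
    ring

/-- Any functional on `𝓗` with values in `ℝ ∪ {+∞}` which is invariant
under isometries, lower semicontinuous with respect to Hausdorff convergence, and
decreasing under Steiner symmetrization, is minimized over unit-area elements of `𝓗`
by the regular hexagon. -/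
theorem statement1 (F : Set E2 → EReal)
    (hbot : ∀ H : Set E2, Hex H → F H ≠ ⊥)
    (hiso : ∀ (f : E2 ≃ᵢ E2) (H : Set E2), Hex H → F (f '' H) = F H)
    (hlsc : ∀ (Hn : ℕ → Set E2) (H : Set E2), (∀ n, Hex (Hn n)) → Hex H →
      HausdorffTendsto Hn H → F H ≤ liminf (fun n => F (Hn n)) atTop)
    (hsteiner : ∀ (v : E2) (c : ℝ) (H : Set E2), ‖v‖ = 1 → Hex H →
      Hex (steiner v c H) → F (steiner v c H) ≤ F H)
    (Hstar : Set E2) (hreg : IsRegularHexagon Hstar) (hvolstar : volume Hstar = 1) :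
    ∀ H : Set E2, Hex H → volume H = 1 → F Hstar ≤ F H := by
  intro H hH hvol
  obtain ⟨g, T, hT, hT', rfl⟩ := exists_eq_image_unitHex hreg hvolstar
  obtain ⟨γ, t, hγ, ht, hle⟩ := exists_unitHex_le F hiso hsteiner hH hvol
  rw [hiso g _ (hex_unitHex one_le_two hT)]
  exact (unitHex_limit_le F hiso hlsc hsteiner hγ ht hT hT').trans hle
end
end

section
/- Let F be a function from the class 𝓗 to ℝ ∪ {+∞} which is invariant under isometries of ℝ², is lower semicontinuous along Hausdorff-convergent sequences in 𝓗, satisfies F(S_π(H)) ≤ F(H) for every affine line π and every H ∈ 𝓗 with S_π(H) ∈ 𝓗, and moreover satisfies the strict inequality F(S_π(H)) < F(H) whenever H, S_π(H) ∈ 𝓗 and S_π(H) is not a translate of H. Then every minimizer of F among elements of 𝓗 with unit area is a regular hexagon; i.e. if H ∈ 𝓗, |H| = 1 and F(H) ≤ F(H') for all H' ∈ 𝓗 with |H'| = 1, then H is a regular hexagon. -/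
open MeasureTheory Metric Filter Real Set
open scoped Topology ENNReal NNReal RealInnerProductSpace

noncomputable section

/-- Midpoint of the vertical chord at abscissa `s` of the hexagon with vertices
`±(a, m - d)`, `±(b, k)`, `±(a, m + d)`. -/
def chordMid (a b m k s : ℝ) : ℝ :=
  if |s| ≤ a then m * s / a
  else if 0 < s then m + (k - m) * (s - a) / (b - a)
  else -(m + (k - m) * (-s - a) / (b - a))

/-- Half-length of the vertical chord at abscissa `s` of the hexagon with vertices
`±(a, m - d)`, `±(b, k)`, `±(a, m + d)`. -/
def chordHalf (a b d s : ℝ) : ℝ :=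
  if |s| ≤ a then d else d * (b - |s|) / (b - a)

lemma chordHalf_nonneg {a b d s : ℝ} (hd : 0 < d) (hs : |s| ≤ b) :
    0 ≤ chordHalf a b d s := by
  unfold chordHalf
  split_ifs with h
  · exact hd.le
  · exact div_nonneg (mul_nonneg hd.le (by linarith)) (by linarith)

/-- The side inequalities of the hexagon, on a vertical chord to the right of the middle strip. -/
lemma side_inequalities_iff_of_lt {a b d m k s y : ℝ} (ha : 0 ≤ a) (hd : 0 < d)
    (hmk : |b * m - a * k| ≤ a * d) (hs : a < s) (hab : a ≤ b) :
    (|s * (m + d - k) - y * (a - b)| ≤ b * (m + d) - k * a ∧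
      |s * (k - (m - d)) - y * (b - a)| ≤ a * k - (m - d) * b ∧
      |s * (m - d + (m + d)) - y * (a + a)| ≤ a * (m + d) - (m - d) * a) ↔
    s ≤ b ∧ |y - (m + (k - m) * (s - a) / (b - a))| ≤ d * (b - s) / (b - a) := by
  rw [abs_le] at hmk
  obtain ⟨hmk1, hmk2⟩ := hmk
  rcases hab.eq_or_lt with rfl | hlt
  · refine ⟨fun ⟨h1, h2, _⟩ => ?_, fun h => absurd h.1 (not_le.2 hs)⟩
    rw [abs_le] at h1 h2
    nlinarith
  have hba : 0 < b - a := sub_pos.2 hlt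
  obtain ⟨z, rfl⟩ : ∃ z, y = z + (m + (k - m) * (s - a) / (b - a)) :=
    ⟨y - (m + (k - m) * (s - a) / (b - a)), by ring⟩
  have key : (z + (m + (k - m) * (s - a) / (b - a))) * (b - a)
      = z * (b - a) + m * (b - a) + (k - m) * (s - a) := by
    field_simp
    ring
  rw [add_sub_cancel_right, le_div_iff₀ hba, ← abs_of_pos hba, ← abs_mul, abs_of_pos hba]
  set Y := z + (m + (k - m) * (s - a) / (b - a)) with hY
  clear_value Y
  simp only [abs_le]
  constructor
  · rintro ⟨⟨_, h1⟩, ⟨_, h2⟩, _⟩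
    refine ⟨?_, ?_, ?_⟩ <;> nlinarith
  · rintro ⟨hsb, h1, h2⟩
    refine ⟨⟨by nlinarith, by nlinarith⟩, ⟨by nlinarith, by nlinarith⟩, ?_⟩
    have e : (s * m - Y * a) * (b - a)
        = (s - a) * (b * m - a * k) - a * (z * (b - a)) := by linear_combination (-a) * key
    have g1 := mul_le_mul_of_nonneg_left hmk1 (sub_nonneg.2 hs.le)
    have g2 := mul_le_mul_of_nonneg_left hmk2 (sub_nonneg.2 hs.le)
    have g3 := mul_le_mul_of_nonneg_left h1 ha
    have g4 := mul_le_mul_of_nonneg_left h2 ha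
    have u1 : s * m - Y * a ≤ a * d := by
      refine le_of_mul_le_mul_right ?_ hba
      linarith
    have u2 : -(a * d) ≤ s * m - Y * a := by
      refine le_of_mul_le_mul_right ?_ hba
      linarith
    constructor <;> linarith

/-- The side inequalities of the hexagon with vertices `±(a, m - d)`, `±(b, k)`, `±(a, m + d)`
describe its vertical chords. -/
lemma side_inequalities_iff {a b d m k : ℝ} (ha : 0 ≤ a) (hab : a ≤ b) (hb : 0 < b) (hd : 0 < d)
    (hmk : |b * m - a * k| ≤ a * d) (s y : ℝ) :
    (|s * (m + d - k) - y * (a - b)| ≤ b * (m + d) - k * a ∧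
      |s * (k - (m - d)) - y * (b - a)| ≤ a * k - (m - d) * b ∧
      |s * (m - d + (m + d)) - y * (a + a)| ≤ a * (m + d) - (m - d) * a) ↔
    |s| ≤ b ∧ |y - chordMid a b m k s| ≤ chordHalf a b d s := by
  unfold chordMid chordHalf
  by_cases hs : |s| ≤ a
  · simp only [hs, if_true]
    rcases ha.eq_or_lt with rfl | ha
    · have h0 : s = 0 := abs_eq_zero.1 (le_antisymm hs (abs_nonneg s))
      have hm : m = 0 := by
        have : |b * m| = 0 := le_antisymm (by simpa using hmk) (abs_nonneg _)
        simpa [hb.ne'] using this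
      subst h0 hm
      suffices |y| ≤ d → b * |y| ≤ d * b by
        simpa [abs_mul, abs_of_pos hb, mul_comm y, hb.le, hb]
      intro h
      nlinarith
    · obtain ⟨z, rfl⟩ : ∃ z, y = z + m * s / a := ⟨y - m * s / a, by ring⟩
      have key : (z + m * s / a) * a = z * a + m * s := by field_simp
      rw [add_sub_cancel_right]
      set Y := z + m * s / a with hY
      clear_value Y
      have e1 : (s * (m + d - k) - Y * (a - b)) * a
          = s * (a * d + (b * m - a * k)) + a * (b - a) * z := by
        linear_combination (b - a) * key
      have e2 : (s * (k - (m - d)) - Y * (b - a)) * a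
          = s * (a * d - (b * m - a * k)) - a * (b - a) * z := by
        linear_combination (a - b) * key
      simp only [abs_le] at hs hmk ⊢
      obtain ⟨hs1, hs2⟩ := hs
      obtain ⟨hmk1, hmk2⟩ := hmk
      constructor
      · rintro ⟨_, _, h1, h2⟩
        refine ⟨⟨by linarith, by linarith⟩, ?_, ?_⟩
        · refine le_of_mul_le_mul_right ?_ ha
          linarith
        · refine le_of_mul_le_mul_right ?_ ha
          linarith
      · rintro ⟨_, h1, h2⟩
        have c1 : 0 ≤ a * d + (b * m - a * k) := by linarith
        have c2 : 0 ≤ a * d - (b * m - a * k) := by linarith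
        have f1 := mul_le_mul_of_nonneg_right hs1 c1
        have f2 := mul_le_mul_of_nonneg_right hs2 c1
        have f3 := mul_le_mul_of_nonneg_right hs1 c2
        have f4 := mul_le_mul_of_nonneg_right hs2 c2
        have c3 : 0 ≤ a * (b - a) := mul_nonneg ha.le (by linarith)
        have f5 := mul_le_mul_of_nonneg_left h1 c3
        have f6 := mul_le_mul_of_nonneg_left h2 c3
        have f7 := mul_le_mul_of_nonneg_left h1 ha.le
        have f8 := mul_le_mul_of_nonneg_left h2 ha.le
        refine ⟨⟨?_, ?_⟩, ⟨?_, ?_⟩, by linarith, by linarith⟩ <;>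
        · refine le_of_mul_le_mul_right ?_ ha
          linarith
  · simp only [hs, if_false]
    rw [not_le] at hs
    by_cases h0 : 0 < s
    · simp only [h0, if_true]
      rw [abs_of_pos h0] at hs ⊢
      exact side_inequalities_iff_of_lt ha hd hmk hs hab
    · simp only [h0, if_false]
      rw [abs_of_nonpos (not_lt.1 h0)] at hs ⊢
      have h := side_inequalities_iff_of_lt (y := -y) ha hd hmk hs hab
      rw [← abs_neg (y - _), ← abs_neg (s * (m + d - k) - _), ← abs_neg (s * (k - (m - d)) - _),
        ← abs_neg (s * (m - d + (m + d)) - _)]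
      convert h using 3 <;> ring_nf

/-- The centrally symmetric hexagon with vertices `±p`, `±q`, `±r`. -/
def symHull (p q r : E2) : Set E2 := convexHull ℝ {p, q, r, -p, -q, -r}

/-- The points `p, q, r, -p, -q, -r` are in this order on the boundary of a nondegenerate convex
polygon: every two of them span a positively oriented (possibly flat) triangle with the origin and
the areas of these triangles satisfy the triangle inequalities. -/
structure InHexOrder (p q r : E2) : Prop where
  left : det2 q r ≤ det2 p r + det2 p q
  middle : det2 p r ≤ det2 q r + det2 p q
  right : det2 p q ≤ det2 q r + det2 p r
  pos : 0 < det2 q r + det2 p r + det2 p q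

/-- The intersection of the strips bounded by the lines through opposite sides of the hexagon
with vertices `±p`, `±q`, `±r`. -/
def stripInter (p q r : E2) : Set E2 :=
  {x | |det2 x (r - q)| ≤ det2 q r ∧ |det2 x (q - p)| ≤ det2 p q ∧ |det2 x (p + r)| ≤ det2 p r}

lemma det2_add_left (x y z : E2) : det2 (x + y) z = det2 x z + det2 y z := by
  simp [det2]; ring
lemma det2_add_right (x y z : E2) : det2 x (y + z) = det2 x y + det2 x z := by
  simp [det2]; ring
lemma det2_sub_right (x y z : E2) : det2 x (y - z) = det2 x y - det2 x z := by
  simp [det2]; ring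
lemma det2_neg_left (x y : E2) : det2 (-x) y = -det2 x y := by
  simp [det2]; ring
lemma det2_neg_right (x y : E2) : det2 x (-y) = -det2 x y := by
  simp [det2]; ring
lemma det2_smul_left (t : ℝ) (x y : E2) : det2 (t • x) y = t * det2 x y := by
  simp [det2]; ring
lemma det2_smul_right (t : ℝ) (x y : E2) : det2 x (t • y) = t * det2 x y := by
  simp [det2]; ring
lemma det2_self (x : E2) : det2 x x = 0 := by
  simp [det2]; ring
lemma det2_swap (x y : E2) : det2 x y = -det2 y x := by
  simp [det2]; ring

lemma det2_smul_eq (p q x : E2) : det2 p q • x = det2 x q • p + det2 p x • q := by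
  ext i
  fin_cases i <;> simp [det2] <;> ring

lemma InHexOrder.rotate {p q r : E2} (h : InHexOrder p q r) : InHexOrder q r (-p) := by
  have e1 : det2 r (-p) = det2 p r := by rw [det2_neg_right, ← det2_swap]
  have e2 : det2 q (-p) = det2 p q := by rw [det2_neg_right, ← det2_swap]
  obtain ⟨h1, h2, h3, h4⟩ := h
  constructor <;> rw [e1, e2] <;> linarith

lemma symHull_rotate (p q r : E2) : symHull q r (-p) = symHull p q r := by
  unfold symHull
  congr 1
  ext x
  simp only [mem_insert_iff, mem_singleton_iff, neg_neg]
  tauto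

lemma neg_mem_symHull {p q r x : E2} (hx : x ∈ symHull p q r) : -x ∈ symHull p q r := by
  have : -symHull p q r = symHull p q r := by
    unfold symHull
    rw [← convexHull_neg]
    congr 1
    ext x
    simp only [Set.mem_neg, mem_insert_iff, mem_singleton_iff, neg_eq_iff_eq_neg, neg_neg]
    tauto
  rw [← this]
  simpa using hx

lemma zero_mem_symHull (p q r : E2) : (0 : E2) ∈ symHull p q r := by
  have hp : p ∈ symHull p q r := subset_convexHull _ _ (by simp)
  have := (convex_convexHull ℝ _ : Convex ℝ (symHull p q r)) hp (neg_mem_symHull hp)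
    (a := 1 / 2) (b := 1 / 2) (by norm_num) (by norm_num) (by norm_num)
  rw [one_div, smul_neg, add_neg_cancel] at this
  exact this

lemma convex_abs_det2_le (u : E2) (c : ℝ) : Convex ℝ {x : E2 | |det2 x u| ≤ c} := by
  intro x hx y hy s t hs ht hst
  simp only [mem_ofPred_eq, det2_add_left, det2_smul_left, abs_le] at *
  constructor <;> nlinarith

lemma symHull_subset_stripInter {p q r : E2} (h : InHexOrder p q r) :
    symHull p q r ⊆ stripInter p q r := by
  obtain ⟨h1, h2, h3, h4⟩ := h
  have s1 := det2_swap q p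
  have s2 := det2_swap r p
  have s3 := det2_swap r q
  have hc : Convex ℝ (stripInter p q r) := (convex_abs_det2_le _ _).inter
    ((convex_abs_det2_le _ _).inter (convex_abs_det2_le _ _))
  refine convexHull_min ?_ hc
  rintro x (rfl | rfl | rfl | rfl | rfl | rfl) <;>
  simp only [stripInter, mem_ofPred_eq, det2_add_right, det2_sub_right, det2_self, det2_neg_left,
    abs_le] <;>
  refine ⟨⟨?_, ?_⟩, ⟨?_, ?_⟩, ?_, ?_⟩ <;> linarith

/-- A convex set containing `0`, `u` and `w` contains the triangle they span. -/
lemma Convex.mem_of_det2_le {S : Set E2} (hS : Convex ℝ S) {u w x : E2} (h0 : (0 : E2) ∈ S)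
    (hu : u ∈ S) (hw : w ∈ S) (hd : 0 < det2 u w) (h1 : 0 ≤ det2 x w) (h2 : 0 ≤ det2 u x)
    (h3 : det2 x (w - u) ≤ det2 u w) : x ∈ S := by
  have hsum : det2 x w / det2 u w + det2 u x / det2 u w ≤ 1 := by
    rw [← add_div, div_le_one hd, det2_swap u x]
    rw [det2_sub_right] at h3
    linarith
  have hx : x = (det2 x w / det2 u w) • u + (det2 u x / det2 u w) • w := by
    have := congrArg (fun y => (det2 u w)⁻¹ • y) (det2_smul_eq u w x)
    simp only [smul_add, smul_smul, inv_mul_cancel₀ hd.ne', one_smul] at this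
    simpa only [div_eq_inv_mul] using this
  have := hS.sum_mem (t := Finset.univ) (w := ![1 - (det2 x w / det2 u w + det2 u x / det2 u w),
    det2 x w / det2 u w, det2 u x / det2 u w]) (z := ![0, u, w]) ?_ ?_ ?_
  · rw [hx]
    simpa [Fin.sum_univ_three] using this
  · intro i _
    fin_cases i
    · simpa using hsum
    · exact div_nonneg h1 hd.le
    · exact div_nonneg h2 hd.le
  · simp only [Fin.sum_univ_three]
    simp
    ring
  · intro i _
    fin_cases i <;> simpa

lemma symHull_eq_stripInter {p q r : E2} (h : InHexOrder p q r) :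
    symHull p q r = stripInter p q r := by
  refine (symHull_subset_stripInter h).antisymm ?_
  have hc : Convex ℝ (symHull p q r) := convex_convexHull ℝ _
  have h0 := zero_mem_symHull p q r
  have hp : p ∈ symHull p q r := subset_convexHull _ _ (by simp)
  have hq : q ∈ symHull p q r := subset_convexHull _ _ (by simp)
  have hr : r ∈ symHull p q r := subset_convexHull _ _ (by simp)
  have hnp := neg_mem_symHull hp
  have rel : ∀ x, det2 q r * det2 p x + det2 p q * det2 r x = det2 p r * det2 q x := by
    intro x
    simp only [det2]
    ring
  have key : ∀ x, 0 ≤ det2 q x → x ∈ stripInter p q r → x ∈ symHull p q r := by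
    rintro x hqx ⟨h1, h2, h3⟩
    have rx := rel x
    obtain ⟨g1, g2, g3, g4⟩ := h
    have cone_qr : 0 < det2 q r → det2 r x ≤ 0 → x ∈ symHull p q r := fun hd hrx =>
      hc.mem_of_det2_le h0 hq hr hd (by rw [det2_swap]; linarith) hqx (abs_le.1 h1).2
    have cone_rp : 0 < det2 p r → 0 ≤ det2 r x → 0 ≤ det2 p x → x ∈ symHull p q r :=
      fun hd hrx hpx => hc.mem_of_det2_le h0 hr hnp (by rwa [det2_neg_right, ← det2_swap])
        (by rwa [det2_neg_right, ← det2_swap]) hrx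
        (by
          have := (abs_le.1 h3).1
          rw [det2_neg_right, ← det2_swap, det2_sub_right, det2_neg_right]
          rw [det2_add_right] at this
          linarith)
    have cone_pq : 0 < det2 p q → det2 p x ≤ 0 → x ∈ symHull p q r :=
      fun hd hpx => hc.mem_of_det2_le h0 hnp (neg_mem_symHull hq)
        (by rwa [det2_neg_right, det2_neg_left, neg_neg])
        (by rwa [det2_neg_right, ← det2_swap])
        (by rw [det2_neg_left]; linarith)
        (by
          have := (abs_le.1 h2).1
          rw [det2_neg_right, det2_neg_left, det2_sub_right, det2_neg_right, det2_neg_right]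
          rw [det2_sub_right] at this
          linarith)
    have nA : 0 ≤ det2 q r := by linarith
    have nB : 0 ≤ det2 p r := by linarith
    have nC : 0 ≤ det2 p q := by linarith
    rcases nA.eq_or_lt with hA | hA
    · have : det2 p q = det2 p r := by linarith
      rcases le_total 0 (det2 p x) with hpx | hpx
      · exact cone_rp (by linarith) (by nlinarith) hpx
      · exact cone_pq (by linarith) hpx
    rcases le_total (det2 r x) 0 with hrx | hrx
    · exact cone_qr hA hrx
    rcases le_total 0 (det2 p x) with hpx | hpx
    · rcases nB.eq_or_lt with hB | hB
      · have : det2 p q = det2 q r := by linarith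
        refine cone_qr hA ?_
        nlinarith
      · exact cone_rp hB hrx hpx
    · rcases nC.eq_or_lt with hC | hC
      · have : det2 p r = det2 q r := by linarith
        refine cone_rp (by linarith) hrx ?_
        nlinarith
      · exact cone_pq hC hpx
  intro x hx
  rcases le_total 0 (det2 q x) with hqx | hqx
  · exact key x hqx hx
  · rw [← neg_neg x]
    refine neg_mem_symHull (key _ (by rw [det2_neg_right]; linarith) ?_)
    simpa only [stripInter, mem_ofPred_eq, det2_neg_left, abs_neg] using hx

/-- The vertical unit vector. -/
def vert : E2 := !₂[0, 1]

lemma norm_vert : ‖vert‖ = 1 := by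
  simp [vert, EuclideanSpace.norm_eq]

lemma inner_vert (x : E2) : ⟪x, vert⟫ = x 1 := by
  simp [vert, PiLp.inner_apply, Fin.sum_univ_two]

lemma hausdorffMeasure_inter_lineThrough_vert {A : Set E2} {x : E2} {m h : ℝ}
    (hA : ∀ t : ℝ, !₂[x 0, t] ∈ A ↔ |t - m| ≤ h) :
    μH[1] (A ∩ lineThrough x vert) = ENNReal.ofReal (2 * h) := by
  have hiso : Isometry (fun t : ℝ => (!₂[x 0, t] : E2)) := by
    refine Isometry.of_dist_eq fun s t => ?_
    simp [EuclideanSpace.dist_eq, Real.dist_eq, Real.sqrt_sq_eq_abs]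
  have himg : A ∩ lineThrough x vert = (fun t : ℝ => (!₂[x 0, t] : E2)) '' Icc (m - h) (m + h) := by
    ext y
    constructor
    · rintro ⟨hy, t, rfl⟩
      have e : x + t • vert = !₂[x 0, x 1 + t] := by
        ext i
        fin_cases i <;> simp [vert]
      rw [e, hA, abs_le] at hy
      exact ⟨x 1 + t, ⟨by linarith, by linarith⟩, e.symm⟩
    · rintro ⟨t, ht, rfl⟩
      refine ⟨(hA t).2 (abs_le.2 ⟨by linarith [ht.1], by linarith [ht.2]⟩), t - x 1, ?_⟩
      ext i
      fin_cases i <;> simp [vert]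
  rw [himg, hiso.hausdorffMeasure_image (Or.inl zero_le_one), hausdorffMeasure_real,
    Real.volume_Icc]
  congr 1
  ring

lemma steiner_vert_eq {A : Set E2} {b : ℝ} {M h : ℝ → ℝ} (hh : ∀ s, |s| ≤ b → 0 ≤ h s)
    (hA : ∀ s t : ℝ, !₂[s, t] ∈ A ↔ |s| ≤ b ∧ |t - M s| ≤ h s) :
    steiner vert 0 A = {x | |x 0| ≤ b ∧ |x 1| ≤ h (x 0)} := by
  have hμ : ∀ x : E2, |x 0| ≤ b →
      μH[1] (A ∩ lineThrough x vert) = ENNReal.ofReal (2 * h (x 0)) := fun x hx =>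
    hausdorffMeasure_inter_lineThrough_vert (m := M (x 0)) fun t => by simp [hA, hx]
  ext y
  constructor
  · rintro ⟨x, hx, ⟨z, hz, t, rfl⟩, r, rfl, hr⟩
    rw [inner_vert] at hx
    have e : x + t • vert = !₂[x 0, t] := by
      ext i
      fin_cases i <;> simp [vert, hx]
    rw [e, hA] at hz
    rw [hμ x hz.1, ENNReal.ofReal_le_ofReal_iff (by linarith [hh _ hz.1])] at hr
    refine ⟨by simpa [vert] using hz.1, ?_⟩
    have e0 : (x + r • vert) 0 = x 0 := by simp [vert]
    have e1 : (x + r • vert) 1 = r := by simp [vert, hx]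
    rw [e0, e1]
    linarith
  · rintro ⟨h0, h1⟩
    refine ⟨!₂[y 0, 0], by simp [inner_vert], ⟨!₂[y 0, M (y 0)], ?_, M (y 0), ?_⟩, y 1, ?_, ?_⟩
    · exact (hA _ _).2 ⟨h0, by simpa using hh _ h0⟩
    · ext i
      fin_cases i <;> simp [vert]
    · ext i
      fin_cases i <;> simp [vert]
    · rw [hμ _ (by simpa using h0)]
      exact ENNReal.ofReal_le_ofReal (by simpa using h1)

lemma measurePreserving_coords :
    MeasurePreserving (fun z : ℝ × ℝ => (!₂[z.1, z.2] : E2)) := by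
  have h1 := (EuclideanSpace.volume_preserving_symm_measurableEquiv_toLp (Fin 2))
  have h2 := (volume_preserving_finTwoArrow ℝ).symm
  exact h1.symm.comp h2

/-- Cavalieri principle for sets whose vertical chords are translates of each other. -/
lemma volume_eq_of_shear {A A' : Set E2} (hA : MeasurableSet A) (hA' : MeasurableSet A')
    (M : ℝ → ℝ) (h : ∀ s t : ℝ, !₂[s, t] ∈ A ↔ !₂[s, t - M s] ∈ A') : volume A = volume A' := by
  rw [← measurePreserving_coords.measure_preimage hA.nullMeasurableSet,
    ← measurePreserving_coords.measure_preimage hA'.nullMeasurableSet, Measure.volume_eq_prod,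
    Measure.prod_apply (measurePreserving_coords.measurable hA),
    Measure.prod_apply (measurePreserving_coords.measurable hA')]
  refine lintegral_congr fun s => ?_
  refine Eq.trans ?_ (measure_preimage_add_right volume (-M s) _)
  congr 1
  ext t
  simpa [sub_eq_add_neg] using h s t

lemma convex_symHull (p q r : E2) : Convex ℝ (symHull p q r) := convex_convexHull ℝ _

lemma isCompact_symHull (p q r : E2) : IsCompact (symHull p q r) :=
  (Set.toFinite _).isCompact_convexHull ℝ

lemma hex_symHull {p q r : E2} (h : volume (symHull p q r) ≠ 0) : Hex (symHull p q r) := by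
  refine ⟨⟨0, p, q, r, by simp [symHull]⟩, ?_⟩
  by_contra hne
  rw [Set.not_nonempty_iff_eq_empty] at hne
  have hfr := (convex_symHull p q r).addHaar_frontier volume
  rw [(isCompact_symHull p q r).isClosed.frontier_eq, hne, sdiff_empty] at hfr
  exact h hfr

/-- A nontrivial translate of a centrally symmetric compact set is not symmetric about the same
center. -/
lemma eq_zero_of_translate_symmetric {K K' : Set E2} (hK : IsCompact K) (hne : K.Nonempty)
    (hs : ∀ x ∈ K, -x ∈ K) (hs' : ∀ x ∈ K', -x ∈ K') {x₀ : E2}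
    (h : K' = (fun y => x₀ + y) '' K) : x₀ = 0 := by
  obtain ⟨z, hz, hmax⟩ := hK.exists_isMaxOn hne
    (f := fun y => ⟪x₀, y⟫) (by fun_prop)
  have h1 : -(x₀ + z) ∈ K' := hs' _ (h ▸ mem_image_of_mem _ hz)
  rw [h] at h1
  obtain ⟨w, hw, hwz⟩ := h1
  have hw' : -w = (2 : ℝ) • x₀ + z := by
    have : w = -(x₀ + z) - x₀ := by rw [← hwz]; simp
    rw [this, two_smul]
    abel
  have h2 : ⟪x₀, -w⟫ ≤ ⟪x₀, z⟫ := hmax (hs _ hw)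
  rw [hw', inner_add_right, inner_smul_right] at h2
  have h3 : ⟪x₀, x₀⟫ ≤ 0 := by linarith
  exact inner_self_eq_zero.1 (le_antisymm h3 real_inner_self_nonneg)

lemma InHexOrder.chord_bounds {p q r : E2} (h : InHexOrder p q r) (hpr : p 0 = r 0)
    (hlt : p 1 < r 1) : 0 ≤ p 0 ∧ p 0 ≤ q 0 ∧ 0 < q 0 ∧
      |q 0 * ((p 1 + r 1) / 2) - p 0 * q 1| ≤ p 0 * ((r 1 - p 1) / 2) := by
  obtain ⟨h1, h2, h3, h4⟩ := h
  simp only [det2, ← hpr] at h1 h2 h3 h4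
  have hd : 0 < r 1 - p 1 := sub_pos.2 hlt
  refine ⟨?_, ?_, ?_, abs_le.2 ⟨by linarith, by linarith⟩⟩ <;> nlinarith

lemma mem_symHull_iff_chord {p q r : E2} (h : InHexOrder p q r) (hpr : p 0 = r 0)
    (hlt : p 1 < r 1) (s t : ℝ) :
    !₂[s, t] ∈ symHull p q r ↔ |s| ≤ q 0 ∧
      |t - chordMid (p 0) (q 0) ((p 1 + r 1) / 2) (q 1) s|
        ≤ chordHalf (p 0) (q 0) ((r 1 - p 1) / 2) s := by
  obtain ⟨ha, hab, hb, hmk⟩ := h.chord_bounds hpr hlt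
  rw [symHull_eq_stripInter h, ← side_inequalities_iff ha hab hb (by linarith) hmk]
  have e1 : (p 1 + r 1) / 2 + (r 1 - p 1) / 2 = r 1 := by ring
  have e2 : (p 1 + r 1) / 2 - (r 1 - p 1) / 2 = p 1 := by ring
  simp only [e1, e2]
  simp [stripInter, det2, ← hpr]

lemma chordMid_zero (a b s : ℝ) : chordMid a b 0 0 s = 0 := by
  simp [chordMid]

/-- If symmetrizing in the (vertical) direction of the diagonal from `p` to `r` only translates
the hexagon, then the horizontal axis bisects this diagonal and passes through `q`, unless `q` lies
on the diagonal. -/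
lemma axis_of_vertical {p q r : E2} (h : InHexOrder p q r) (hpr : p 0 = r 0) (hlt : p 1 < r 1)
    (hvol : volume (symHull p q r) ≠ 0)
    (hR : Hex (steiner vert 0 (symHull p q r)) →
      volume (steiner vert 0 (symHull p q r)) = volume (symHull p q r) →
      ∃ x₀ : E2, steiner vert 0 (symHull p q r) = (fun y => x₀ + y) '' symHull p q r) :
    p 1 + r 1 = 0 ∧ (det2 p r < det2 q r + det2 p q → q 1 = 0) := by
  obtain ⟨ha, hab, hb, hmk⟩ := h.chord_bounds hpr hlt
  have hmem := mem_symHull_iff_chord h hpr hlt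
  set a := p 0 with ha_def
  set b := q 0 with hb_def
  set m := (p 1 + r 1) / 2 with hm_def
  set d := (r 1 - p 1) / 2 with hd_def
  have hd : 0 < d := by rw [hd_def]; linarith
  have hh : ∀ s, |s| ≤ b → 0 ≤ chordHalf a b d s := fun s => chordHalf_nonneg hd
  have h' : InHexOrder !₂[a, -d] !₂[b, 0] !₂[a, d] := by
    constructor <;> simp [det2] <;> nlinarith
  have hmem' : ∀ s t : ℝ, !₂[s, t] ∈ symHull !₂[a, -d] !₂[b, 0] !₂[a, d] ↔
      |s| ≤ b ∧ |t| ≤ chordHalf a b d s := by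
    intro s t
    rw [mem_symHull_iff_chord h' (by simp) (by simpa using hd)]
    simp [chordMid_zero]
  have hst : steiner vert 0 (symHull p q r) = symHull !₂[a, -d] !₂[b, 0] !₂[a, d] := by
    rw [steiner_vert_eq hh hmem]
    ext x
    have ex : x = !₂[x 0, x 1] := by
      ext i
      fin_cases i <;> simp
    rw [ex, hmem']
    simp
  have hvol' : volume (symHull p q r) = volume (symHull !₂[a, -d] !₂[b, 0] !₂[a, d]) :=
    volume_eq_of_shear (isCompact_symHull _ _ _).measurableSet
      (isCompact_symHull _ _ _).measurableSet (chordMid a b m (q 1))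
      fun s t => by rw [hmem, hmem']
  rw [hst] at hR
  obtain ⟨x₀, hx₀⟩ := hR (hex_symHull (hvol' ▸ hvol)) hvol'.symm
  obtain rfl := eq_zero_of_translate_symmetric (isCompact_symHull _ _ _)
    ⟨0, zero_mem_symHull _ _ _⟩ (fun _ => neg_mem_symHull) (fun _ => neg_mem_symHull) hx₀
  simp only [zero_add, image_id'] at hx₀
  have hM : ∀ s, |s| ≤ b → chordMid a b m (q 1) s = 0 := by
    intro s hs
    have hiff : ∀ t, |t| ≤ chordHalf a b d s → |t - chordMid a b m (q 1) s| ≤ chordHalf a b d s :=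
      fun t ht => ((hmem s t).1 (hx₀ ▸ (hmem' s t).2 ⟨hs, ht⟩)).2
    have h1 := (abs_le.1 (hiff (chordHalf a b d s) (abs_of_nonneg (hh s hs)).le)).2
    have h2 := (abs_le.1 (hiff (-chordHalf a b d s)
      (by rw [abs_neg, abs_of_nonneg (hh s hs)]))).1
    linarith
  constructor
  · have hm : m = 0 := by
      rcases ha.eq_or_lt with h0 | h0
      · rw [← h0] at hmk
        have : |b * m| = 0 := le_antisymm (by simpa using hmk) (abs_nonneg _)
        simpa [hb.ne'] using this
      · have := hM a (by rwa [abs_of_nonneg ha])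
        simpa [chordMid, abs_of_nonneg ha, h0.ne'] using this
    linarith
  · intro hlt'
    have hab' : a < b := by
      simp only [det2, ← hpr, ← ha_def, ← hb_def] at hlt'
      nlinarith
    have := hM b (abs_of_pos hb).le
    simpa [chordMid, abs_of_pos hb, hab'.not_ge, hb, (sub_pos.2 hab').ne'] using this

/-- The rotation taking the unit vector `v` to the vertical one. -/
def rotToVert (v : E2) (hv : ‖v‖ = 1) : E2 ≃ₗᵢ[ℝ] E2 :=
  LinearIsometry.toLinearIsometryEquiv
    { toFun := fun x => !₂[det2 x v, ⟪x, v⟫]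
      map_add' := fun x y => by
        ext i
        fin_cases i <;> simp [det2_add_left, inner_add_left]
      map_smul' := fun t x => by
        ext i
        fin_cases i <;> simp [det2_smul_left, inner_smul_left]
      norm_map' := fun x => by
        have h : v 0 ^ 2 + v 1 ^ 2 = 1 := by
          have := EuclideanSpace.norm_sq_eq v
          simpa [hv, Fin.sum_univ_two] using this.symm
        rw [← sq_eq_sq₀ (norm_nonneg _) (norm_nonneg _), EuclideanSpace.norm_sq_eq,
          EuclideanSpace.norm_sq_eq]
        simp [Fin.sum_univ_two, det2, PiLp.inner_apply]
        linear_combination (x 0 ^ 2 + x 1 ^ 2) * h }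
    rfl

lemma rotToVert_zero (v : E2) (hv : ‖v‖ = 1) (x : E2) : rotToVert v hv x 0 = det2 x v := rfl

lemma rotToVert_one (v : E2) (hv : ‖v‖ = 1) (x : E2) : rotToVert v hv x 1 = ⟪x, v⟫ := rfl

lemma det2_rotToVert (v : E2) (hv : ‖v‖ = 1) (x y : E2) :
    det2 (rotToVert v hv x) (rotToVert v hv y) = det2 x y := by
  have h : v 0 ^ 2 + v 1 ^ 2 = 1 := by
    have := EuclideanSpace.norm_sq_eq v
    simpa [hv, Fin.sum_univ_two] using this.symm
  have e : ∀ a b : E2, ⟪a, b⟫ = a 0 * b 0 + a 1 * b 1 := fun a b => by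
    simp [PiLp.inner_apply, Fin.sum_univ_two, mul_comm]
  rw [det2, rotToVert_zero, rotToVert_one, rotToVert_zero, rotToVert_one, e, e]
  simp only [det2]
  linear_combination (x 0 * y 1 - x 1 * y 0) * h

lemma image_symHull (g : E2 →ₗ[ℝ] E2) (p q r : E2) :
    g '' symHull p q r = symHull (g p) (g q) (g r) := by
  simp only [symHull, g.image_convexHull, image_insert_eq, image_singleton, map_neg]

lemma volume_image_symHull (f : E2 ≃ₗᵢ[ℝ] E2) (p q r : E2) :
    volume (f '' symHull p q r) = volume (symHull p q r) := by
  rw [f.image_eq_preimage_symm]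
  exact f.symm.measurePreserving.measure_preimage
    (isCompact_symHull p q r).measurableSet.nullMeasurableSet

/-- No Steiner symmetrization in `𝓗` that preserves the area changes the shape of `K`. -/
def SteinerRigid (K : Set E2) : Prop :=
  ∀ f : E2 ≃ₗᵢ[ℝ] E2, Hex (steiner vert 0 (f '' K)) →
    volume (steiner vert 0 (f '' K)) = volume (f '' K) →
    ∃ x₀ : E2, steiner vert 0 (f '' K) = (fun y => x₀ + y) '' (f '' K)

lemma InHexOrder.det_nonneg {p q r : E2} (h : InHexOrder p q r) :
    0 ≤ det2 q r ∧ 0 ≤ det2 p r ∧ 0 ≤ det2 p q := by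
  obtain ⟨h1, h2, h3, h4⟩ := h
  exact ⟨by linarith, by linarith, by linarith⟩

lemma axis_of_diagonal {p q r : E2} (h : InHexOrder p q r) (hvol : volume (symHull p q r) ≠ 0)
    (hR : SteinerRigid (symHull p q r)) :
    ⟪p, p⟫ = ⟪r, r⟫ ∧ (det2 p r < det2 q r + det2 p q → ⟪q, r - p⟫ = 0) := by
  have hne : r - p ≠ 0 := by
    intro h0
    obtain ⟨h1, h2, h3⟩ := h.det_nonneg
    have h4 := h.pos
    obtain rfl := sub_eq_zero.1 h0
    rw [det2_swap r q] at h3 h4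
    rw [det2_self] at h4
    linarith
  have hn : 0 < ‖r - p‖ := norm_pos_iff.2 hne
  have hv : ‖‖r - p‖⁻¹ • (r - p)‖ = 1 := by
    rw [norm_smul, norm_inv, norm_norm, inv_mul_cancel₀ hn.ne']
  set v := ‖r - p‖⁻¹ • (r - p) with hv_def
  set f := rotToVert v hv with hf
  have himg : f '' symHull p q r = symHull (f p) (f q) (f r) :=
    image_symHull f.toLinearEquiv.toLinearMap p q r
  have hord : InHexOrder (f p) (f q) (f r) := by
    obtain ⟨h1, h2, h3, h4⟩ := h
    constructor <;> simpa only [hf, det2_rotToVert]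
  have h0 : f p 0 = f r 0 := by
    rw [hf, rotToVert_zero, rotToVert_zero, hv_def, det2_smul_right, det2_smul_right,
      det2_sub_right, det2_sub_right, det2_self, det2_self, det2_swap r p]
    ring
  have h1 : f p 1 < f r 1 := by
    rw [hf, rotToVert_one, rotToVert_one, ← sub_pos, ← inner_sub_left, hv_def, inner_smul_right,
      real_inner_self_eq_norm_sq]
    positivity
  have hvol' : volume (symHull (f p) (f q) (f r)) ≠ 0 := by
    rwa [← himg, volume_image_symHull]
  have hR' := hR f
  rw [himg] at hR'
  obtain ⟨g1, g2⟩ := axis_of_vertical hord h0 h1 hvol' hR'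
  have hin : ∀ x : E2, ⟪x, v⟫ = 0 → ⟪x, r - p⟫ = 0 := by
    intro x hx
    rw [hv_def, inner_smul_right] at hx
    exact (mul_eq_zero.1 hx).resolve_left (inv_pos.2 hn).ne'
  constructor
  · have : ⟪p + r, r - p⟫ = 0 := hin _ (by rw [inner_add_left]; exact g1)
    rw [inner_add_left, inner_sub_right, inner_sub_right, real_inner_comm p r] at this
    linarith
  · intro hlt
    exact hin q (g2 (by simpa only [hf, det2_rotToVert] using hlt))

lemma exists_ne_zero_det2_eq_zero {p q r : E2} (hA : det2 q r = 0) (hB : det2 p r = 0)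
    (hC : det2 p q = 0) : ∃ u : E2, u ≠ 0 ∧ det2 p u = 0 ∧ det2 q u = 0 ∧ det2 r u = 0 := by
  by_cases hp : p = 0
  · by_cases hq : q = 0
    · by_cases hr : r = 0
      · exact ⟨vert, by rw [← norm_ne_zero_iff, norm_vert]; exact one_ne_zero,
          by simp [hp, hq, hr, det2]⟩
      · exact ⟨r, hr, hB, hA, det2_self r⟩
    · exact ⟨q, hq, hC, det2_self q, by rw [det2_swap, hA, neg_zero]⟩
  · exact ⟨p, hp, det2_self p, by rw [det2_swap, hC, neg_zero], by rw [det2_swap, hB, neg_zero]⟩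

lemma volume_symHull_eq_zero {p q r : E2} (hA : det2 q r = 0) (hB : det2 p r = 0)
    (hC : det2 p q = 0) : volume (symHull p q r) = 0 := by
  obtain ⟨u, hu, hp, hq, hr⟩ := exists_ne_zero_det2_eq_zero hA hB hC
  let S : Submodule ℝ E2 :=
    { carrier := {x | det2 x u = 0}
      add_mem' := fun {x y} hx hy => by
        simp only [mem_ofPred_eq] at *
        rw [det2_add_left, hx, hy, add_zero]
      zero_mem' := by simp [det2]
      smul_mem' := fun t x hx => by
        simp only [mem_ofPred_eq] at *
        rw [det2_smul_left, hx, mul_zero] }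
  have hS : S ≠ ⊤ := by
    intro hS
    have hmem : ∀ x : E2, det2 x u = 0 := fun x => by
      have : x ∈ S := hS ▸ Submodule.mem_top
      exact this
    have h0 := hmem !₂[1, 0]
    have h1 := hmem !₂[0, 1]
    simp [det2] at h0 h1
    apply hu
    ext i
    fin_cases i <;> simp [h0, h1]
  refine measure_mono_null (convexHull_min ?_ S.convex) (Measure.addHaar_submodule volume S hS)
  have : ∀ x, det2 x u = 0 → x ∈ S := fun x hx => hx
  rintro x (rfl | rfl | rfl | rfl | rfl | rfl)
  all_goals
    refine this _ ?_
    simp only [det2_neg_left, hp, hq, hr, neg_zero]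

lemma symHull_eq_of_mem {p q r : E2} (hq : q ∈ symHull p p r) :
    symHull p q r = symHull p p r := by
  apply Subset.antisymm <;> refine convexHull_min ?_ (convex_symHull _ _ _)
  · have hp : p ∈ symHull p p r := subset_convexHull _ _ (by simp)
    have hr : r ∈ symHull p p r := subset_convexHull _ _ (by simp)
    rintro x (rfl | rfl | rfl | rfl | rfl | rfl)
    exacts [hp, hq, hr, neg_mem_symHull hp, neg_mem_symHull hq, neg_mem_symHull hr]
  · refine Subset.trans ?_ (subset_convexHull ℝ _)
    intro x
    simp only [mem_insert_iff, mem_singleton_iff]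
    tauto

/-- Either the points `p, q, r, -p, -q, -r` are in strictly convex position, or `q` is the midpoint
of a side of the parallelogram with vertices `p, r, -p, -r`. -/
def IsNormalized (p q r : E2) : Prop :=
  InHexOrder p q r ∧
    ((det2 q r < det2 p r + det2 p q ∧ det2 p r < det2 q r + det2 p q ∧
      det2 p q < det2 q r + det2 p r) ∨ q = (1 / 2 : ℝ) • (p + r))

lemma exists_isNormalized_of_parallelogram {p q r : E2} (hA : 0 ≤ det2 q r) (hC : 0 ≤ det2 p q)
    (hB : 0 < det2 p r) (h : det2 q r + det2 p q ≤ det2 p r) :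
    ∃ p' q' r', IsNormalized p' q' r' ∧ symHull p' q' r' = symHull p q r := by
  have h0 := zero_mem_symHull p p r
  have hp : p ∈ symHull p p r := subset_convexHull _ _ (by simp)
  have hr : r ∈ symHull p p r := subset_convexHull _ _ (by simp)
  have hq : q ∈ symHull p p r := by
    refine (convex_symHull p p r).mem_of_det2_le h0 hp hr hB hA hC ?_
    rw [det2_sub_right, det2_swap q p]
    linarith
  have hm : (1 / 2 : ℝ) • (p + r) ∈ symHull p p r := by
    rw [smul_add]
    exact convex_symHull p p r hp hr (by norm_num) (by norm_num) (by norm_num)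
  refine ⟨p, (1 / 2 : ℝ) • (p + r), r, ⟨?_, Or.inr rfl⟩, ?_⟩
  · constructor <;>
    simp only [det2_smul_left, det2_smul_right, det2_add_left, det2_add_right, det2_self] <;>
    linarith
  · rw [symHull_eq_of_mem hm, symHull_eq_of_mem hq]

lemma exists_isNormalized_of_nonneg {p q r : E2} (hA : 0 ≤ det2 q r) (hB : 0 ≤ det2 p r)
    (hC : 0 ≤ det2 p q) (hpos : 0 < det2 q r + det2 p r + det2 p q) :
    ∃ p' q' r', IsNormalized p' q' r' ∧ symHull p' q' r' = symHull p q r := by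
  have e1 : det2 r (-p) = det2 p r := by rw [det2_neg_right, ← det2_swap]
  have e2 : det2 q (-p) = det2 p q := by rw [det2_neg_right, ← det2_swap]
  have e3 : det2 (-p) (-q) = det2 p q := by rw [det2_neg_right, det2_neg_left, neg_neg]
  have e4 : det2 r (-q) = det2 q r := by rw [det2_neg_right, ← det2_swap]
  by_cases h2 : det2 q r + det2 p q ≤ det2 p r
  · exact exists_isNormalized_of_parallelogram hA hC (by linarith) h2
  by_cases h1 : det2 p r + det2 p q ≤ det2 q r
  · rw [← symHull_rotate p q r, ← symHull_rotate q r (-p)]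
    exact exists_isNormalized_of_parallelogram (by rwa [e3]) (by rwa [e1])
      (by rw [e4]; linarith) (by rw [e1, e3, e4]; linarith)
  by_cases h3 : det2 q r + det2 p r ≤ det2 p q
  · rw [← symHull_rotate p q r]
    exact exists_isNormalized_of_parallelogram (by rwa [e1]) hA
      (by rw [e2]; linarith) (by rw [e1, e2]; linarith)
  rw [not_le] at h1 h2 h3
  exact ⟨p, q, r, ⟨⟨h1.le, h2.le, h3.le, hpos⟩, Or.inl ⟨h1, h2, h3⟩⟩, rfl⟩

lemma symHull_neg_middle (p q r : E2) : symHull p (-q) r = symHull p q r := by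
  unfold symHull
  congr 1
  ext x
  simp only [mem_insert_iff, mem_singleton_iff, neg_neg]
  tauto

lemma symHull_neg_right (p q r : E2) : symHull p q (-r) = symHull p q r := by
  unfold symHull
  congr 1
  ext x
  simp only [mem_insert_iff, mem_singleton_iff, neg_neg]
  tauto

lemma symHull_swap (p q r : E2) : symHull p r q = symHull p q r := by
  unfold symHull
  congr 1
  ext x
  simp only [mem_insert_iff, mem_singleton_iff]
  tauto

lemma exists_isNormalized {p q r : E2} (h : volume (symHull p q r) ≠ 0) :
    ∃ p' q' r', IsNormalized p' q' r' ∧ symHull p' q' r' = symHull p q r := by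
  wlog hC : 0 ≤ det2 p q generalizing q
  · rw [← symHull_neg_middle] at h ⊢
    exact this h (by rw [det2_neg_right]; linarith)
  wlog hA : 0 ≤ det2 q r generalizing r
  · rw [← symHull_neg_right] at h ⊢
    exact this h (by rw [det2_neg_right]; linarith)
  by_cases hB : 0 ≤ det2 p r
  · refine exists_isNormalized_of_nonneg hA hB hC ?_
    by_contra hpos
    exact h (volume_symHull_eq_zero (by linarith) (by linarith) (by linarith))
  · rw [← symHull_swap, ← symHull_neg_middle]
    refine exists_isNormalized_of_nonneg ?_ hC ?_ ?_ <;>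
    simp only [det2_neg_left, det2_neg_right, det2_swap r q] <;> linarith

lemma det2_sq (x y : E2) : det2 x y ^ 2 = ⟪x, x⟫ * ⟪y, y⟫ - ⟪x, y⟫ ^ 2 := by
  simp only [det2, PiLp.inner_apply, Fin.sum_univ_two]
  simp
  ring

/-- A rigid hexagon in normalized position has the inner products of a regular one. -/
lemma SteinerRigid.regular {p q r : E2} (h : IsNormalized p q r)
    (hvol : volume (symHull p q r) ≠ 0) (hR : SteinerRigid (symHull p q r)) :
    0 < ⟪p, p⟫ ∧ ⟪q, q⟫ = ⟪p, p⟫ ∧ 2 * ⟪p, q⟫ = ⟪p, p⟫ ∧ r = q - p := by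
  obtain ⟨hord, hcase⟩ := h
  have e1 : det2 r (-p) = det2 p r := by rw [det2_neg_right, ← det2_swap]
  have e2 : det2 q (-p) = det2 p q := by rw [det2_neg_right, ← det2_swap]
  have e3 : det2 (-p) (-q) = det2 p q := by rw [det2_neg_right, det2_neg_left, neg_neg]
  have e4 : det2 r (-q) = det2 q r := by rw [det2_neg_right, ← det2_swap]
  have h1 := axis_of_diagonal hord hvol hR
  have h2 := axis_of_diagonal hord.rotate (by rwa [symHull_rotate]) (by rwa [symHull_rotate])
  have h3 := axis_of_diagonal hord.rotate.rotate (by rwa [symHull_rotate, symHull_rotate])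
    (by rwa [symHull_rotate, symHull_rotate])
  rw [e1, e2] at h2
  rw [e1, e3, e4] at h3
  obtain ⟨hn1, ho1⟩ := h1
  obtain ⟨hn2, ho2⟩ := h2
  obtain ⟨hn3, ho3⟩ := h3
  have hpos := hord.pos
  obtain ⟨nA, nB, nC⟩ := hord.det_nonneg
  have hp0 : 0 < ⟪p, p⟫ := by
    refine lt_of_le_of_ne real_inner_self_nonneg fun h0 => ?_
    obtain rfl : p = 0 := inner_self_eq_zero.1 h0.symm
    have z : ∀ x : E2, det2 0 x = 0 := fun x => by simp [det2]
    have := hord.left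
    rw [z, z] at hpos this
    linarith
  rcases hcase with ⟨c1, c2, c3⟩ | rfl
  · have o1 := ho1 c2
    have o2 := ho2 (by linarith)
    have o3 := ho3 (by linarith)
    simp only [inner_sub_right, inner_neg_left, inner_neg_right, neg_neg] at o1 o2 o3 hn2 hn3
    rw [real_inner_comm q r, real_inner_comm p r] at o2
    rw [real_inner_comm p q] at o1
    have sA := det2_sq q r
    have sB := det2_sq p r
    have sC := det2_sq p q
    have qr : ⟪q, r⟫ = ⟪p, q⟫ := by linarith
    have pr : ⟪p, r⟫ = -⟪p, q⟫ := by linarith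
    rw [qr, ← hn3, ← hn1] at sA
    rw [pr, ← hn1] at sB
    rw [hn2] at sC
    have hAC : det2 q r = det2 p q := (sq_eq_sq₀ nA nC).1 (by rw [sA, sC])
    have hBC : det2 p r = det2 p q := (sq_eq_sq₀ nB nC).1 (by rw [sB, sC]; ring)
    have hC : 0 < det2 p q := by linarith
    have rel := det2_smul_eq p r q
    rw [hBC, hAC, ← smul_add] at rel
    have hq : q = p + r := smul_right_injective E2 hC.ne' rel
    refine ⟨hp0, hn2, ?_, by rw [hq]; abel⟩
    have := congrArg (fun x => ⟪p, x⟫) hq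
    simp only [inner_add_right] at this
    linarith
  · exfalso
    simp only [det2_smul_left, det2_smul_right, det2_add_left, det2_add_right, det2_self]
      at ho2 ho3 hpos
    have o2 := ho2 (by linarith)
    have o3 := ho3 (by linarith)
    simp only [inner_sub_right, inner_neg_left, inner_neg_right, neg_neg, real_inner_smul_left,
      real_inner_smul_right, inner_add_left, inner_add_right] at o2 o3 hn2
    have := real_inner_comm p r
    linarith

lemma hexVertex_add_three (k : ℕ) : hexVertex (k + 3) = -hexVertex k := by
  have : ((k + 3 : ℕ) : ℝ) * π / 3 = k * π / 3 + π := by push_cast; ring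
  simp only [hexVertex, this, Real.cos_add_pi, Real.sin_add_pi]
  ext i
  fin_cases i <;> simp

lemma stdHexagon_eq : stdHexagon = symHull (hexVertex 0) (hexVertex 1) (hexVertex 2) := by
  unfold stdHexagon symHull
  congr 1
  ext x
  simp only [mem_range, Fin.exists_fin_succ, mem_insert_iff, mem_singleton_iff,
    ← hexVertex_add_three]
  simp [eq_comm]

lemma hexVertex_zero : hexVertex 0 = !₂[1, 0] := by
  ext i
  fin_cases i <;> simp [hexVertex]

lemma hexVertex_one : hexVertex 1 = !₂[1 / 2, √3 / 2] := by
  ext i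
  fin_cases i <;> simp [hexVertex]

lemma hexVertex_two : hexVertex 2 = !₂[-(1 / 2), √3 / 2] := by
  have : (2 : ℝ) * π / 3 = π - π / 3 := by ring
  ext i
  fin_cases i <;> simp [hexVertex, this, Real.cos_pi_sub, Real.sin_pi_sub]

/-- The linear map taking the standard basis to `u`, `w`. -/
def frameMap (u w : E2) : E2 →ₗ[ℝ] E2 where
  toFun x := x 0 • u + x 1 • w
  map_add' x y := by
    simp only [PiLp.add_apply, add_smul]
    abel
  map_smul' t x := by
    simp only [PiLp.smul_apply, smul_eq_mul, mul_smul, smul_add, RingHom.id_apply]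

lemma norm_frameMap {u w : E2} (h : ⟪w, w⟫ = ⟪u, u⟫) (h0 : ⟪u, w⟫ = 0) (x : E2) :
    ‖frameMap u w x‖ = ‖u‖ * ‖x‖ := by
  rw [← sq_eq_sq₀ (norm_nonneg _) (by positivity), mul_pow, EuclideanSpace.norm_sq_eq x,
    ← real_inner_self_eq_norm_sq, ← real_inner_self_eq_norm_sq]
  have h0' : ⟪w, u⟫ = 0 := by rw [real_inner_comm, h0]
  simp only [frameMap, LinearMap.coe_mk, AddHom.coe_mk, inner_add_left, inner_add_right,
    real_inner_smul_left, real_inner_smul_right, h, h0, h0', Fin.sum_univ_two, Real.norm_eq_abs,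
    sq_abs]
  ring

lemma isRegularHexagon_translate {p q : E2} (x₀ : E2) (hp : 0 < ⟪p, p⟫) (hq : ⟪q, q⟫ = ⟪p, p⟫)
    (hpq : 2 * ⟪p, q⟫ = ⟪p, p⟫) :
    IsRegularHexagon ((fun y => x₀ + y) '' symHull p q (q - p)) := by
  have h3' : (√3 : ℝ)⁻¹ * (√3)⁻¹ = 1 / 3 := by
    rw [← mul_inv, Real.mul_self_sqrt (by norm_num)]
    norm_num
  set w : E2 := (√3)⁻¹ • ((2 : ℝ) • q - p) with hw
  have hqp : ⟪q, p⟫ = ⟪p, q⟫ := real_inner_comm _ _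
  have hww : ⟪w, w⟫ = ⟪p, p⟫ := by
    simp only [hw, real_inner_smul_left, real_inner_smul_right, inner_sub_left, inner_sub_right,
      hq, hqp]
    linear_combination (5 * ⟪p, p⟫ - 4 * ⟪p, q⟫) * h3' - 2 / 3 * hpq
  have hpw : ⟪p, w⟫ = 0 := by
    simp only [hw, real_inner_smul_right, inner_sub_right, hpq, sub_self, mul_zero]
  have hs : 0 < ‖p‖ := by
    rw [norm_pos_iff]
    rintro rfl
    simp at hp
  refine ⟨fun x => x₀ + frameMap p w x, ⟨‖p‖, hs, fun x y => ?_⟩, ?_⟩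
  · rw [dist_add_left, dist_eq_norm, ← map_sub, norm_frameMap hww hpw, dist_eq_norm]
  · have v0 : frameMap p w (hexVertex 0) = p := by
      simp [hexVertex_zero, frameMap]
    have hw2 : (√3 / 2) • w = q - (1 / 2 : ℝ) • p := by
      rw [hw, smul_smul, show √3 / 2 * (√3)⁻¹ = (1 / 2 : ℝ) by field_simp, smul_sub, smul_smul]
      norm_num
    have v1 : frameMap p w (hexVertex 1) = q := by
      simp only [hexVertex_one, frameMap, LinearMap.coe_mk, AddHom.coe_mk]
      simp [hw2]
    have v2 : frameMap p w (hexVertex 2) = q - p := by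
      simp only [hexVertex_two, frameMap, LinearMap.coe_mk, AddHom.coe_mk]
      simp [hw2]
      module
    rw [stdHexagon_eq, ← image_image (fun y => x₀ + y) (frameMap p w), image_symHull, v0, v1, v2]

/-- If moreover the functional strictly decreases under any Steiner
symmetrization which does not merely translate the set, then every minimizer over
unit-area elements of `𝓗` is a regular hexagon. -/
theorem statement2 (F : Set E2 → EReal)
    (hbot : ∀ H : Set E2, Hex H → F H ≠ ⊥)
    (hiso : ∀ (f : E2 ≃ᵢ E2) (H : Set E2), Hex H → F (f '' H) = F H)
    (hlsc : ∀ (Hn : ℕ → Set E2) (H : Set E2), (∀ n, Hex (Hn n)) → Hex H →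
      HausdorffTendsto Hn H → F H ≤ liminf (fun n => F (Hn n)) atTop)
    (hsteiner : ∀ (v : E2) (c : ℝ) (H : Set E2), ‖v‖ = 1 → Hex H →
      Hex (steiner v c H) → F (steiner v c H) ≤ F H)
    (hstrict : ∀ (v : E2) (c : ℝ) (H : Set E2), ‖v‖ = 1 → Hex H →
      Hex (steiner v c H) → (¬ ∃ x₀ : E2, steiner v c H = (fun y => x₀ + y) '' H) →
      F (steiner v c H) < F H) :
    ∀ H : Set E2, Hex H → volume H = 1 →
      (∀ H' : Set E2, Hex H' → volume H' = 1 → F H ≤ F H') →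
      IsRegularHexagon H := by
  rintro H ⟨⟨x₀, p₀, q₀, r₀, hH⟩, hint⟩ hvol hmin
  have hvol₀ : volume (symHull p₀ q₀ r₀) = 1 := by
    rw [← hvol, hH, image_add_left, measure_preimage_add, symHull]
  obtain ⟨p, q, r, hnorm, hhull⟩ := exists_isNormalized (hvol₀ ▸ one_ne_zero)
  rw [← symHull, ← hhull] at hH
  rw [← hhull] at hvol₀
  have hne : volume (symHull p q r) ≠ 0 := hvol₀ ▸ one_ne_zero
  have hrigid : SteinerRigid (symHull p q r) := by
    intro f hhex hvol'
    by_contra htr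
    have himg : f '' symHull p q r = symHull (f p) (f q) (f r) :=
      image_symHull f.toLinearEquiv.toLinearMap p q r
    have hK : Hex (f '' symHull p q r) := by
      rw [himg]
      apply hex_symHull
      rwa [← himg, volume_image_symHull]
    have hF : F (f '' symHull p q r) = F H := by
      rw [← hiso ((IsometryEquiv.addLeft (-x₀)).trans f.toIsometryEquiv) H
        ⟨⟨x₀, p, q, r, hH⟩, hint⟩, hH, image_image]
      congr 1
      refine image_congr fun y _ => ?_
      change f y = f (-x₀ + (x₀ + y))
      rw [neg_add_cancel_left]
    have hlt := hstrict vert 0 _ norm_vert hK hhex htr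
    rw [hF] at hlt
    refine (hmin _ hhex ?_).not_gt hlt
    rw [hvol', volume_image_symHull, hvol₀]
  obtain ⟨hp, hq, hpq, rfl⟩ := hrigid.regular hnorm hne
  rw [hH]
  exact isRegularHexagon_translate x₀ hp hq hpq
end
end
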